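/- arXiv:1508.00099 — 2 statements merged into one kernel-verified Lean document; each statement's English description precedes it below -/
import Mathlib

section
/- Let X = (X_t)_{t∈[0,1]} be a centered Gaussian process. If there exist constants C > 0 and H ∈ (0,1) such that ‖X_t − X_s‖₂ ≥ C|t−s|^H for all t, s ∈ [0,1], then E[sup_{0≤t≤1} X_t] ≥ C/√(4Hπe·ln 2), and in particular E[sup_{0≤t≤1} X_t] > C/(5√H). -/
open MeasureTheory ProbabilityTheory Real Set Filter Topology

noncomputable section

/-- `X` is a centered Gaussian process on the time set `S`: every finite linear
combination `∑ i, c i * X (ts i)` of its values at times in `S` is a centered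
Gaussian random variable. -/
def IsCenteredGaussianOn {Ω : Type} [MeasurableSpace Ω] (μ : Measure Ω)
    (X : ℝ → Ω → ℝ) (S : Set ℝ) : Prop :=
  (∀ t ∈ S, Measurable (X t)) ∧
  ∀ (k : ℕ) (c : Fin k → ℝ) (ts : Fin k → ℝ), (∀ i, ts i ∈ S) →
    ∃ v : NNReal, μ.map (fun ω => ∑ i, c i * X (ts i) ω) = gaussianReal 0 v

/-- The `L²`-norm `‖Y‖₂ = (E Y²)^{1/2}` of a real random variable. -/
def l2norm {Ω : Type} [MeasurableSpace Ω] (μ : Measure Ω) (Y : Ω → ℝ) : ℝ :=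
  Real.sqrt (∫ ω, (Y ω) ^ 2 ∂μ)

/-- The expected supremum `E [sup_{0 ≤ t ≤ 1} X_t]`. -/
def expMax {Ω : Type} [MeasurableSpace Ω] (μ : Measure Ω) (X : ℝ → Ω → ℝ) : ℝ :=
  ∫ ω, (⨆ t : Icc (0:ℝ) 1, X t.1 ω) ∂μ

/-- The expected maximum over the grid: `E [max_{0 ≤ i ≤ n} X_{i/n}]`. -/
def expMaxGrid {Ω : Type} [MeasurableSpace Ω] (μ : Measure Ω) (X : ℝ → Ω → ℝ) (n : ℕ) : ℝ :=
  ∫ ω, (⨆ i : Fin (n + 1), X (((i : ℕ) : ℝ) / (n : ℝ)) ω) ∂μ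

/-- `B` is a fractional Brownian motion with Hurst parameter `H`: a centered Gaussian
process on `[0,∞)` with a.s. continuous sample paths, `B 0 = 0`, and covariance
`E[B_s B_t] = (s^{2H} + t^{2H} - |t-s|^{2H}) / 2`. -/
def IsFBM {Ω : Type} [MeasurableSpace Ω] (μ : Measure Ω) (H : ℝ) (B : ℝ → Ω → ℝ) : Prop :=
  IsCenteredGaussianOn μ B (Ici 0) ∧
  (∀ᵐ ω ∂μ, ContinuousOn (fun t => B t ω) (Ici 0)) ∧
  (∀ᵐ ω ∂μ, B 0 ω = 0) ∧
  ∀ s t : ℝ, 0 ≤ s → 0 ≤ t →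
    ∫ ω, B s ω * B t ω ∂μ = (s ^ (2 * H) + t ^ (2 * H) - |t - s| ^ (2 * H)) / 2

/-!
By the Sudakov-Fernique inequality, a centered Gaussian vector dominates in expected maximum any
other one with smaller increments. A process with `‖X_t - X_s‖₂ ≥ C |t - s| ^ H`, sampled at
`n ^ m` equally spaced points, is therefore compared with the suitably scaled sums
`g_{1, v₁} + ⋯ + g_{m, vₘ}` of independent standard Gaussian variables, indexed by words `v` of
length `m` in `n` letters: two distinct words give increments of variance at most `2 m`, while the
maximum of the sum is the sum of the maxima over each position and has expectation `m` times that
of the maximum of `n` standard Gaussian variables. Three letters with `m ≈ 1 / (2 H)` suffice for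
`H ≤ 1 / 2`, and two points for `H > 1 / 2`.
-/

section RealGaussian

variable {m : ℝ} {v : NNReal}

lemma integral_abs_gaussianReal (v : NNReal) :
    ∫ x, |x| ∂gaussianReal 0 v = √(2 * v / π) := by
  by_cases hv : v = 0
  · simp [hv]
  have : (0 : ℝ) < v := by positivity
  have density_eq (x : ℝ) : gaussianPDFReal 0 v x • |x| =
      (√(2 * π * v))⁻¹ * (|x| * rexp (-(1 / (2 * v)) * |x| ^ 2)) := by
    rw [gaussianPDFReal, smul_eq_mul, sq_abs, sub_zero]
    ring_nf
  have radial : ∫ x in Ioi (0 : ℝ), x * rexp (-(1 / (2 * v)) * x ^ 2) = v := by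
    have := integral_rpow_mul_exp_neg_mul_rpow (p := 2) (q := 1) (b := 1 / (2 * v))
      (by norm_num) (by norm_num) (by positivity)
    simp only [rpow_one, rpow_ofNat] at this
    rw [this, show (-(1 + 1) / 2 : ℝ) = -1 by norm_num, show ((1 + 1) / 2 : ℝ) = 1 by norm_num,
      Gamma_one, rpow_neg_one]
    field_simp
  rw [integral_gaussianReal_eq_integral_smul hv]
  simp_rw [density_eq]
  rw [integral_const_mul, integral_comp_abs (f := fun x => x * rexp (-(1 / (2 * v)) * x ^ 2)),
    radial, eq_comm, sqrt_eq_iff_mul_self_eq (by positivity) (by positivity), ← sq, mul_pow,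
    inv_pow, sq_sqrt (by positivity)]
  field_simp

lemma integrable_gaussianReal_iff {F : Type*} [NormedAddCommGroup F] [NormedSpace ℝ F]
    (hv : v ≠ 0) {f : ℝ → F} :
    Integrable f (gaussianReal m v) ↔ Integrable (fun x => gaussianPDFReal m v x • f x) := by
  rw [gaussianReal_of_var_ne_zero m hv, integrable_withDensity_iff_integrable_smul'
    (measurable_gaussianPDF m v) (ae_of_all _ fun _ => ENNReal.ofReal_lt_top)]
  simp_rw [toReal_gaussianPDF]

lemma hasDerivAt_gaussianPDFReal (m : ℝ) (hv : v ≠ 0) (x : ℝ) :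
    HasDerivAt (gaussianPDFReal m v) (-((x - m) / v) * gaussianPDFReal m v x) x := by
  rw [gaussianPDFReal_def]
  have hexponent : HasDerivAt (fun y : ℝ => -(y - m) ^ 2 / (2 * (v : ℝ))) (-((x - m) / v)) x := by
    convert! (((hasDerivAt_id x).sub_const m).pow 2).neg.div_const (2 * (v : ℝ)) using 1
    simp only [Nat.cast_ofNat, id_eq, Nat.add_one_sub_one, pow_one, mul_one]
    field_simp
  convert! hexponent.exp.const_mul (√(2 * π * v))⁻¹ using 1
  ring

lemma integral_sub_mul_gaussianReal {h h' : ℝ → ℝ} (hh : ∀ x, HasDerivAt h (h' x) x)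
    (hmul : Integrable (fun x => (x - m) * h x) (gaussianReal m v))
    (hint : Integrable h (gaussianReal m v)) (hint' : Integrable h' (gaussianReal m v)) :
    ∫ x, (x - m) * h x ∂gaussianReal m v = v * ∫ x, h' x ∂gaussianReal m v := by
  by_cases hv : v = 0
  · simp [hv]
  have hv' : (v : ℝ) ≠ 0 := by positivity
  rw [integrable_gaussianReal_iff hv] at hmul hint hint'
  simp_rw [smul_eq_mul, mul_comm (gaussianPDFReal m v _)] at hmul hint hint'
  have parts : ∫ x, h x * (-((x - m) / v) * gaussianPDFReal m v x) =
      -∫ x, h' x * gaussianPDFReal m v x := by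
    refine integral_mul_deriv_eq_deriv_mul_of_integrable (fun x _ => hh x)
      (fun x _ => hasDerivAt_gaussianPDFReal m hv x) ?_ hint' hint
    convert! hmul.const_mul (-(v : ℝ)⁻¹) using 2 with x
    simp only [Pi.mul_apply]
    ring
  rw [integral_gaussianReal_eq_integral_smul hv, integral_gaussianReal_eq_integral_smul hv]
  simp_rw [smul_eq_mul, mul_comm (gaussianPDFReal m v _) (h' _)]
  rw [← neg_neg (∫ x, h' x * _), ← parts, ← integral_neg, ← integral_const_mul]
  congr with x
  field_simp

end RealGaussian

section IntegrationByParts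

variable {E : Type*} [NormedAddCommGroup E] [NormedSpace ℝ E]
  {Ω : Type*} [MeasurableSpace Ω] {P : Measure Ω} {U : Ω → ℝ}

lemma exists_integral_smul_eq_variance_smul (hU : MemLp U 2 P)
    (hU0 : ∫ ω, U ω ∂P = 0) (Z : Ω → E) : ∃ c : E, ∫ ω, U ω • Z ω ∂P = Var[U; P] • c := by
  by_cases hv : Var[U; P] = 0
  · refine ⟨0, ?_⟩
    have hUzero : U =ᵐ[P] 0 := by
      rw [variance_of_integral_eq_zero hU.aemeasurable hU0,
        integral_eq_zero_iff_of_nonneg (fun _ => sq_nonneg _) hU.integrable_sq] at hv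
      filter_upwards [hv] with ω hω using by simpa using hω
    rw [smul_zero]
    refine integral_eq_zero_of_ae ?_
    filter_upwards [hUzero] with ω hω
    simp [hω]
  · exact ⟨Var[U; P]⁻¹ • ∫ ω, U ω • Z ω ∂P, by rw [smul_inv_smul₀ hv]⟩

variable [MeasurableSpace E] [BorelSpace E] [SecondCountableTopology E]
  {Z : Ω → E} {f : E → ℝ} {f' : E → E →L[ℝ] ℝ} {M M' : ℝ}

lemma integral_fst_mul_comp_add_smul (v : NNReal) (ρ : Measure E) [IsFiniteMeasure ρ] (c : E)
    (hf : ∀ z, HasFDerivAt f (f' z) z) (hf' : Continuous f') (hM : ∀ z, |f z| ≤ M)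
    (hM' : ∀ z, ‖f' z‖ ≤ M') :
    ∫ p : ℝ × E, p.1 * f (p.2 + p.1 • c) ∂(gaussianReal 0 v).prod ρ =
      v * ∫ p : ℝ × E, f' (p.2 + p.1 • c) c ∂(gaussianReal 0 v).prod ρ := by
  have hfcont : Continuous f := continuous_iff_continuousAt.2 fun z => (hf z).continuousAt
  have hline (w : E) (u : ℝ) :
      HasDerivAt (fun u : ℝ => f (w + u • c)) (f' (w + u • c) c) u := by
    refine (hf _).comp_hasDerivAt u ?_
    simpa using! ((hasDerivAt_id u).smul_const c).const_add w
  have hderiv_le (z : E) : ‖f' z c‖ ≤ M' * ‖c‖ :=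
    (f' z).le_of_opNorm_le (hM' z) c
  have hid : Integrable (fun u : ℝ => u) (gaussianReal 0 v) :=
    (memLp_id_gaussianReal' 1 (by simp)).integrable le_rfl
  rw [integral_prod_symm, integral_prod_symm, ← integral_const_mul]
  · refine integral_congr_ae (ae_of_all _ fun w => ?_)
    simpa using integral_sub_mul_gaussianReal (m := 0) (v := v) (hline w)
      (by simpa using hid.mul_bdd (c := M) (by fun_prop) (ae_of_all _ fun _ => hM _))
      (.of_bound (by fun_prop) M (ae_of_all _ fun _ => hM _))
      (.of_bound (by fun_prop) _ (ae_of_all _ fun _ => hderiv_le _))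
  · exact .of_bound (by fun_prop) _ (ae_of_all _ fun _ => hderiv_le _)
  · exact (hid.comp_fst _).mul_bdd (c := M) (by fun_prop) (ae_of_all _ fun _ => hM _)

lemma indepFun_sub_smul_of_covariance [CompleteSpace E]
    (hG : HasGaussianLaw (fun ω => (U ω, Z ω)) P) (c : E)
    (hc : ∀ L : StrongDual ℝ E, cov[U, L ∘ Z; P] = Var[U; P] * L c) :
    IndepFun U (fun ω => Z ω - U ω • c) P := by
  have hP := hG.isProbabilityMeasure
  have hres : HasGaussianLaw (fun ω => (U ω, Z ω - U ω • c)) P := by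
    simpa using! hG.map_fun ((ContinuousLinearMap.fst ℝ ℝ E).prod
      (ContinuousLinearMap.snd ℝ ℝ E - (ContinuousLinearMap.fst ℝ ℝ E).smulRight c))
  refine hres.indepFun_of_covariance_strongDual fun K L => ?_
  have hK : K ∘ U = fun ω => K 1 * U ω := by
    ext ω
    simpa [mul_comm] using K.map_smul (U ω) 1
  have hL : (L ∘ fun ω => Z ω - U ω • c) = fun ω => (L ∘ Z) ω - L c * U ω := by
    ext ω
    simp [mul_comm]
  have hU : MemLp U 2 P := hG.fst.memLp_two
  have hLZ : MemLp (L ∘ Z) 2 P := (hG.snd.map L).memLp_two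
  rw [hK, hL, covariance_const_mul_left, covariance_fun_sub_right hU hLZ (hU.const_mul _), hc,
    covariance_const_mul_right, covariance_self hU.aemeasurable]
  ring

lemma integral_mul_comp_of_hasGaussianLaw [CompleteSpace E]
    (hG : HasGaussianLaw (fun ω => (U ω, Z ω)) P) (hU0 : ∫ ω, U ω ∂P = 0)
    (hf : ∀ z, HasFDerivAt f (f' z) z) (hf' : Continuous f') (hM : ∀ z, |f z| ≤ M)
    (hM' : ∀ z, ‖f' z‖ ≤ M') :
    ∫ ω, U ω * f (Z ω) ∂P = ∫ ω, f' (Z ω) (∫ ω', U ω' • Z ω' ∂P) ∂P := by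
  have hP := hG.isProbabilityMeasure
  have hfcont : Continuous f := continuous_iff_continuousAt.2 fun z => (hf z).continuousAt
  have hU : MemLp U 2 P := hG.fst.memLp_two
  have hZ : MemLp Z 2 P := hG.snd.memLp_two
  obtain ⟨c, hc⟩ := exists_integral_smul_eq_variance_smul hU hU0 Z
  have hindep : IndepFun U (fun ω => Z ω - U ω • c) P := by
    refine indepFun_sub_smul_of_covariance hG c fun L => ?_
    have hpull : ∫ ω, U ω * L (Z ω) ∂P = L (∫ ω, U ω • Z ω ∂P) := by
      simpa using L.integral_comp_comm (memLp_one_iff_integrable.1 (hZ.smul hU))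
    rw [covariance_eq_sub hU (hG.snd.map L).memLp_two, hU0]
    simpa [hc] using hpull
  have hUm : AEMeasurable U P := hU.aemeasurable
  have hWm : AEMeasurable (fun ω => Z ω - U ω • c) P :=
    hZ.aestronglyMeasurable.aemeasurable.sub (hUm.smul_const c)
  have hprod : P.map (fun ω => (U ω, Z ω - U ω • c)) =
      (gaussianReal 0 Var[U; P].toNNReal).prod (P.map fun ω => Z ω - U ω • c) := by
    rw [(indepFun_iff_map_prod_eq_prod_map_map hUm hWm).1 hindep, hG.fst.map_eq_gaussianReal, hU0]
  have := Measure.isProbabilityMeasure_map hWm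
  have key := integral_fst_mul_comp_add_smul Var[U; P].toNNReal (P.map fun ω => Z ω - U ω • c) c
    hf hf' hM hM'
  rw [← hprod, integral_map (hUm.prodMk hWm) (by fun_prop),
    integral_map (hUm.prodMk hWm) (by fun_prop), coe_toNNReal _ (variance_nonneg U P)] at key
  simpa [hc, integral_const_mul] using key

end IntegrationByParts

section Interpolation

variable {E : Type*} [NormedAddCommGroup E] [NormedSpace ℝ E]

open ContinuousLinearMap (rotation)

lemma hasDerivAt_fst_rotation (p : E × E) (θ : ℝ) :
    HasDerivAt (fun θ => (rotation θ p).1) (rotation θ p).2 θ := by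
  simp only [ContinuousLinearMap.rotation_apply]
  exact ((hasDerivAt_cos θ).smul_const p.1).add ((hasDerivAt_sin θ).smul_const p.2)

lemma norm_rotation_le (p : E × E) (θ : ℝ) : ‖rotation θ p‖ ≤ ‖p.1‖ + ‖p.2‖ := by
  have hsmul {a : ℝ} (ha : |a| ≤ 1) (x : E) : ‖a • x‖ ≤ ‖x‖ := by
    rw [norm_smul, norm_eq_abs]
    exact mul_le_of_le_one_left (norm_nonneg x) ha
  rw [ContinuousLinearMap.rotation_apply, Prod.norm_mk]
  refine max_le (norm_add_le_of_le (hsmul (abs_cos_le_one θ) _) (hsmul (abs_sin_le_one θ) _))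
    (norm_add_le_of_le (hsmul ?_ _) (hsmul (abs_cos_le_one θ) _))
  rw [abs_neg]
  exact abs_sin_le_one θ

variable [MeasurableSpace E] [SecondCountableTopology E] {μ ν : Measure E}

lemma integral_dual_snd_rotation_smul_fst [IsProbabilityMeasure μ] [IsProbabilityMeasure ν]
    (hμ : MemLp id 2 μ) (hν : MemLp id 2 ν) (hμ0 : ∫ x, x ∂μ = 0) (hν0 : ∫ x, x ∂ν = 0)
    (L : StrongDual ℝ E) (θ : ℝ) :
    ∫ p, L (rotation θ p).2 • (rotation θ p).1 ∂μ.prod ν =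
      (sin θ * cos θ) • (∫ y, L y • y ∂ν - ∫ x, L x • x ∂μ) := by
  have hμi : Integrable (fun x => x) μ := hμ.integrable one_le_two
  have hνi : Integrable (fun x => x) ν := hν.integrable one_le_two
  have hμ2 : Integrable (fun x => L x • x) μ :=
    memLp_one_iff_integrable.1 (hμ.smul (L.comp_memLp' hμ))
  have hν2 : Integrable (fun x => L x • x) ν :=
    memLp_one_iff_integrable.1 (hν.smul (L.comp_memLp' hν))
  have hexpand (p : E × E) : L (rotation θ p).2 • (rotation θ p).1 =
      (sin θ * cos θ) • (L p.2 • p.2 - L p.1 • p.1) +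
        (cos θ ^ 2 • (L p.2 • p.1) - sin θ ^ 2 • (L p.1 • p.2)) := by
    simp only [ContinuousLinearMap.rotation_apply, map_add, map_smul, smul_eq_mul]
    module
  have hcross : ∫ p, L p.1 • p.2 ∂μ.prod ν = 0 := by
    rw [integral_prod_smul (fun x => L x) (fun y => y), hν0, smul_zero]
  have hcross' : ∫ p, L p.2 • p.1 ∂μ.prod ν = 0 := by
    rw [← integral_prod_swap]
    simp [integral_prod_smul (fun x => L x) (fun y => y), hμ0]
  have hi₁ : Integrable (fun p : E × E => L p.1 • p.2) (μ.prod ν) :=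
    (L.integrable_comp hμi).smul_prod hνi
  have hi₂ : Integrable (fun p : E × E => L p.2 • p.1) (μ.prod ν) :=
    ((L.integrable_comp hνi).smul_prod hμi).swap
  have hi₃ := hμ2.comp_fst ν
  have hi₄ := hν2.comp_snd μ
  simp_rw [hexpand]
  rw [integral_add, integral_smul, integral_sub hi₄ hi₃, integral_sub, integral_smul,
    integral_smul, hcross, hcross', integral_fun_snd (fun y => L y • y),
    integral_fun_fst (fun x => L x • x)]
  · simp
  · fun_prop
  · fun_prop
  · fun_prop
  · fun_prop

variable [BorelSpace E]

lemma hasDerivAt_integral_comp_rotation {P : Measure (E × E)} [IsFiniteMeasure P]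
    (hP : Integrable id P) {F : E → ℝ} {F' : E → E →L[ℝ] ℝ} {M : ℝ}
    (hF : ∀ z, HasFDerivAt F (F' z) z) (hF' : Continuous F') (hM : ∀ z, ‖F' z‖ ≤ M) (θ : ℝ) :
    HasDerivAt (fun θ => ∫ p, F (rotation θ p).1 ∂P)
      (∫ p, F' (rotation θ p).1 (rotation θ p).2 ∂P) θ := by
  have hFcont : Continuous F := continuous_iff_continuousAt.2 fun z => (hF z).continuousAt
  have hM0 : 0 ≤ M := (norm_nonneg _).trans (hM 0)
  have hgrowth (z : E) : ‖F z‖ ≤ ‖F 0‖ + M * ‖z‖ := by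
    have hlip := convex_univ.norm_image_sub_le_of_norm_hasFDerivWithin_le
      (fun x _ => (hF x).hasFDerivWithinAt) (fun x _ => hM x) (mem_univ 0) (mem_univ z)
    rw [sub_zero] at hlip
    exact (norm_le_insert' _ _).trans (add_le_add_right hlip _)
  have hnorm : Integrable (fun p : E × E => ‖p.1‖ + ‖p.2‖) P := hP.fst.norm.add hP.snd.norm
  refine (hasDerivAt_integral_of_dominated_loc_of_deriv_le (𝕜 := ℝ) (s := univ)
    (F' := fun θ p => F' (rotation θ p).1 (rotation θ p).2)
    (bound := fun p : E × E => M * (‖p.1‖ + ‖p.2‖)) univ_mem (.of_forall fun _ => ?_) ?_ ?_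
    (ae_of_all _ fun p θ _ => ?_) (hnorm.const_mul M) (ae_of_all _ fun p θ _ => ?_)).2
  · fun_prop
  · refine ((integrable_const ‖F 0‖).add (hnorm.const_mul M)).mono' (by fun_prop)
      (ae_of_all _ fun p => (hgrowth _).trans ?_)
    exact add_le_add_right (mul_le_mul_of_nonneg_left
      ((norm_fst_le _).trans (norm_rotation_le p θ)) hM0) _
  · fun_prop
  · exact ContinuousLinearMap.le_of_opNorm_le_of_le _ (hM _)
      ((norm_snd_le _).trans (norm_rotation_le p θ))
  · exact (hF _).comp_hasDerivAt θ (hasDerivAt_fst_rotation p θ)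

variable [CompleteSpace E]

lemma integral_dual_snd_rotation_mul_comp_fst [IsGaussian μ] [IsGaussian ν]
    (hμ0 : ∫ x, x ∂μ = 0) (hν0 : ∫ x, x ∂ν = 0) (L : StrongDual ℝ E)
    {f : E → ℝ} {f' : E → E →L[ℝ] ℝ} {M M' : ℝ} (hf : ∀ z, HasFDerivAt f (f' z) z)
    (hf' : Continuous f') (hM : ∀ z, |f z| ≤ M) (hM' : ∀ z, ‖f' z‖ ≤ M') (θ : ℝ) :
    ∫ p, L (rotation θ p).2 * f (rotation θ p).1 ∂μ.prod ν =
      sin θ * cos θ * ∫ p, f' (rotation θ p).1 (∫ y, L y • y ∂ν - ∫ x, L x • x ∂μ) ∂μ.prod ν := by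
  have hG : HasGaussianLaw (fun p => (L (rotation θ p).2, (rotation θ p).1)) (μ.prod ν) :=
    IsGaussian.hasGaussianLaw_id.map_fun (((L ∘L ContinuousLinearMap.snd ℝ E E).prod
      (ContinuousLinearMap.fst ℝ E E)) ∘L rotation θ)
  have hL0 : ∫ p, L (rotation θ p).2 ∂μ.prod ν = 0 := by
    have hfst : Integrable (fun p : E × E => -sin θ • p.1) (μ.prod ν) :=
      (IsGaussian.integrable_fun_id.comp_fst ν).smul _
    have hsnd : Integrable (fun p : E × E => cos θ • p.2) (μ.prod ν) :=
      (IsGaussian.integrable_fun_id.comp_snd μ).smul _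
    have hsum : Integrable (fun p : E × E => -sin θ • p.1 + cos θ • p.2) (μ.prod ν) :=
      hfst.add hsnd
    simp only [ContinuousLinearMap.rotation_apply]
    rw [L.integral_comp_comm hsum, integral_add hfst hsnd, integral_smul, integral_smul,
      integral_fun_fst (fun x => x), integral_fun_snd (fun y => y), hμ0, hν0]
    simp
  rw [integral_mul_comp_of_hasGaussianLaw hG hL0 hf hf' hM hM', integral_dual_snd_rotation_smul_fst
    IsGaussian.memLp_two_id IsGaussian.memLp_two_id hμ0 hν0]
  simp_rw [map_smul, smul_eq_mul, integral_const_mul]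

end Interpolation

section SmoothMax

variable {ι : Type*} [Fintype ι]

/-- The smooth maximum (log-sum-exp) `β⁻¹ log ∑ exp (β xᵢ)` at inverse temperature `β`: a smooth
approximation, within `β⁻¹ log |ι|`, of the maximum of `x`. -/
def smoothMax (β : ℝ) (x : ι → ℝ) : ℝ := log (∑ i, rexp (β * x i)) / β

/-- The Gibbs weight `exp (β xᵢ) / ∑ exp (β xⱼ)`, the `i`-th partial derivative of `smoothMax β`. -/
def gibbsWeight (β : ℝ) (x : ι → ℝ) (i : ι) : ℝ := rexp (β * x i) / ∑ j, rexp (β * x j)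

/-- The mean of a vector under the Gibbs weights at `x`, as a linear form: this is the gradient of
`smoothMax β` at `x`. -/
def gibbsMean (β : ℝ) (x : ι → ℝ) : (ι → ℝ) →L[ℝ] ℝ :=
  ∑ i, gibbsWeight β x i • ContinuousLinearMap.proj i

lemma gibbsMean_apply (β : ℝ) (x y : ι → ℝ) : gibbsMean β x y = ∑ i, gibbsWeight β x i * y i := by
  simp [gibbsMean]

lemma gibbsWeight_nonneg (β : ℝ) (x : ι → ℝ) (i : ι) : 0 ≤ gibbsWeight β x i := by
  unfold gibbsWeight
  positivity

variable [Nonempty ι]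

lemma sum_exp_pos (f : ι → ℝ) : 0 < ∑ i, rexp (f i) :=
  Finset.sum_pos (fun _ _ => exp_pos _) Finset.univ_nonempty

lemma sum_gibbsWeight (β : ℝ) (x : ι → ℝ) : ∑ i, gibbsWeight β x i = 1 := by
  simp_rw [gibbsWeight, ← Finset.sum_div]
  exact div_self (sum_exp_pos _).ne'

lemma abs_gibbsWeight_le_one (β : ℝ) (x : ι → ℝ) (i : ι) : |gibbsWeight β x i| ≤ 1 := by
  rw [abs_of_nonneg (gibbsWeight_nonneg β x i), ← sum_gibbsWeight β x]
  exact Finset.single_le_sum (fun j _ => gibbsWeight_nonneg β x j) (Finset.mem_univ i)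

lemma continuous_gibbsWeight (β : ℝ) (i : ι) :
    Continuous fun x : ι → ℝ => gibbsWeight β x i :=
  Continuous.div (by fun_prop) (by fun_prop) fun _ => (sum_exp_pos _).ne'

lemma continuous_gibbsMean (β : ℝ) : Continuous (gibbsMean β : (ι → ℝ) → (ι → ℝ) →L[ℝ] ℝ) :=
  continuous_finsetSum _ fun i _ => (continuous_gibbsWeight β i).smul continuous_const

lemma norm_gibbsMean_le_one (β : ℝ) (x : ι → ℝ) : ‖gibbsMean β x‖ ≤ 1 := by
  refine ContinuousLinearMap.opNorm_le_bound _ zero_le_one fun y => ?_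
  rw [gibbsMean_apply, ← sum_gibbsWeight β x, Finset.sum_mul]
  refine norm_sum_le_of_le _ fun i _ => ?_
  rw [norm_mul, norm_of_nonneg (gibbsWeight_nonneg β x i)]
  exact mul_le_mul_of_nonneg_left (norm_le_pi_norm y i) (gibbsWeight_nonneg β x i)

lemma hasFDerivAt_log_sum_exp (β : ℝ) (x : ι → ℝ) :
    HasFDerivAt (fun x : ι → ℝ => log (∑ i, rexp (β * x i))) (β • gibbsMean β x) x := by
  have hsum : HasFDerivAt (fun x : ι → ℝ => ∑ i, rexp (β * x i))
      (∑ i, rexp (β * x i) • β • ContinuousLinearMap.proj (R := ℝ) (φ := fun _ => ℝ) i) x :=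
    .fun_sum fun i _ => ((hasFDerivAt_apply i x).const_mul β).exp
  convert! hsum.log (sum_exp_pos _).ne' using 1
  simp_rw [gibbsMean, gibbsWeight, Finset.smul_sum, smul_smul]
  refine Finset.sum_congr rfl fun i _ => ?_
  ring_nf

lemma hasFDerivAt_smoothMax {β : ℝ} (hβ : β ≠ 0) (x : ι → ℝ) :
    HasFDerivAt (smoothMax β) (gibbsMean β x) x := by
  convert! (hasFDerivAt_log_sum_exp β x).mul_const β⁻¹ using 1
  rw [inv_smul_smul₀ hβ]

lemma hasFDerivAt_gibbsWeight (β : ℝ) (x : ι → ℝ) (i : ι) :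
    HasFDerivAt (fun x => gibbsWeight β x i)
      ((β * gibbsWeight β x i) • (ContinuousLinearMap.proj i - gibbsMean β x)) x := by
  have hexp (x : ι → ℝ) :
      gibbsWeight β x i = rexp (β * x i - log (∑ j, rexp (β * x j))) := by
    rw [gibbsWeight, exp_sub, exp_log (sum_exp_pos _)]
  simp_rw [hexp]
  convert! (((hasFDerivAt_apply i x).const_mul β).sub (hasFDerivAt_log_sum_exp β x)).exp using 1
  rw [← smul_sub, smul_smul, mul_comm, Pi.sub_apply]

lemma norm_gibbsWeight_smul_proj_sub_gibbsMean_le (β : ℝ) (x : ι → ℝ) (i : ι) :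
    ‖(β * gibbsWeight β x i) • (ContinuousLinearMap.proj i - gibbsMean β x)‖ ≤ |β| * 2 := by
  have hproj : ‖(ContinuousLinearMap.proj i : (ι → ℝ) →L[ℝ] ℝ)‖ ≤ 1 :=
    ContinuousLinearMap.opNorm_le_bound _ zero_le_one fun y => by
      simpa using norm_le_pi_norm y i
  rw [norm_smul, norm_mul, norm_eq_abs, norm_eq_abs]
  refine mul_le_mul (mul_le_of_le_one_right (abs_nonneg β) (abs_gibbsWeight_le_one β x i))
    ((norm_sub_le _ _).trans ?_) (norm_nonneg _) (abs_nonneg β)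
  linarith [norm_gibbsMean_le_one β x]

/-- The Hessian of `smoothMax` is a weighted graph Laplacian, so it sees a matrix `D` only through
the associated squared distances. -/
lemma sum_gibbsWeight_mul_sub_gibbsMean (β : ℝ) (x : ι → ℝ) (D : ι → ι → ℝ) :
    ∑ i, gibbsWeight β x i * (D i i - gibbsMean β x (D i)) =
      (∑ i, ∑ j, gibbsWeight β x i * gibbsWeight β x j * (D i i + D j j - 2 * D i j)) / 2 := by
  have hdiag : ∑ i, ∑ j, gibbsWeight β x i * gibbsWeight β x j * D i i =
      ∑ i, gibbsWeight β x i * D i i := by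
    refine Finset.sum_congr rfl fun i _ => ?_
    rw [← Finset.sum_mul, ← Finset.mul_sum, sum_gibbsWeight, mul_one]
  have hdiag' : ∑ i, ∑ j, gibbsWeight β x i * gibbsWeight β x j * D j j =
      ∑ i, gibbsWeight β x i * D i i := by
    rw [Finset.sum_comm, ← hdiag]
    simp_rw [mul_comm]
  have hoff : ∑ i, ∑ j, gibbsWeight β x i * gibbsWeight β x j * (2 * D i j) =
      2 * ∑ i, gibbsWeight β x i * gibbsMean β x (D i) := by
    simp_rw [gibbsMean_apply, Finset.mul_sum]
    refine Finset.sum_congr rfl fun i _ => Finset.sum_congr rfl fun j _ => ?_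
    ring
  simp_rw [mul_sub, mul_add, Finset.sum_sub_distrib, Finset.sum_add_distrib, hdiag, hdiag', hoff]
  ring

lemma iSup_le_smoothMax {β : ℝ} (hβ : 0 < β) (x : ι → ℝ) : ⨆ i, x i ≤ smoothMax β x := by
  refine ciSup_le fun i => ?_
  rw [smoothMax, le_div_iff₀ hβ, le_log_iff_exp_le (sum_exp_pos _), mul_comm]
  exact Finset.single_le_sum (f := fun j => rexp (β * x j)) (fun j _ => (exp_pos _).le)
    (Finset.mem_univ i)

lemma smoothMax_le {β : ℝ} (hβ : 0 < β) (x : ι → ℝ) :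
    smoothMax β x ≤ (⨆ i, x i) + log (Fintype.card ι) / β := by
  have hsum : ∑ j, rexp (β * x j) ≤ Fintype.card ι * rexp (β * ⨆ i, x i) := by
    rw [← nsmul_eq_mul]
    refine Finset.sum_le_card_nsmul _ _ _ fun j _ => exp_le_exp.2 ?_
    exact mul_le_mul_of_nonneg_left (le_ciSup (Set.finite_range x).bddAbove j) hβ.le
  have hlog := log_le_log (sum_exp_pos _) hsum
  rw [log_mul (by positivity) (exp_pos _).ne', log_exp] at hlog
  rw [smoothMax, div_le_iff₀ hβ, add_mul, div_mul_cancel₀ _ hβ.ne']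
  linarith

end SmoothMax

section SudakovFernique

open ContinuousLinearMap (rotation)

lemma abs_iSup_le_sum {ι : Type*} [Fintype ι] (x : ι → ℝ) : |⨆ i, x i| ≤ ∑ i, |x i| := by
  cases isEmpty_or_nonempty ι
  · simp
  obtain ⟨i, hi⟩ := exists_eq_ciSup_of_finite (f := x)
  rw [← hi]
  exact Finset.single_le_sum (f := fun j => |x j|) (fun j _ => abs_nonneg _) (Finset.mem_univ i)

lemma integrable_iSup {Ω ι : Type*} [MeasurableSpace Ω] {P : Measure Ω} [Finite ι]
    {f : ι → Ω → ℝ} (hf : ∀ i, Integrable (f i) P) : Integrable (fun ω => ⨆ i, f i ω) P := by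
  have := Fintype.ofFinite ι
  exact (integrable_finsetSum _ fun i _ => (hf i).abs).mono'
    (AEMeasurable.iSup fun i => (hf i).aemeasurable).aestronglyMeasurable
    (ae_of_all _ fun ω => abs_iSup_le_sum _)

lemma integral_id_map_eq_zero {Ω ι : Type*} [MeasurableSpace Ω] {P : Measure Ω} [Fintype ι]
    {X : Ω → ι → ℝ} (hX : Integrable X P) (hX0 : ∀ i, ∫ ω, X ω i ∂P = 0) :
    ∫ x, x ∂P.map X = 0 := by
  rw [integral_map hX.aemeasurable (by fun_prop)]
  ext i
  rw [eval_integral fun i => hX.eval i, hX0, Pi.zero_apply]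

variable {ι : Type*} [Fintype ι] {μ ν : Measure (ι → ℝ)}

lemma variance_eval_sub_eval [IsProbabilityMeasure μ] (hμ : MemLp id 2 μ) (hμ0 : ∫ x, x ∂μ = 0)
    (i j : ι) :
    Var[fun x => x i - x j; μ] =
      (∫ x, x i • x ∂μ) i + (∫ x, x j • x ∂μ) j - 2 * (∫ x, x i • x ∂μ) j := by
  have hmem (k : ι) : MemLp (fun x : ι → ℝ => x k) 2 μ :=
    (ContinuousLinearMap.proj (R := ℝ) (φ := fun _ => ℝ) k).comp_memLp' hμ
  have hmean (k : ι) : ∫ x, x k ∂μ = 0 := by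
    rw [← eval_integral fun i => (hmem i).integrable one_le_two, hμ0, Pi.zero_apply]
  have hmoment (k l : ι) : (∫ x, x k • x ∂μ) l = cov[fun x => x k, fun x => x l; μ] := by
    rw [covariance_eq_sub (hmem k) (hmem l), hmean k, zero_mul, sub_zero]
    exact eval_integral (fun l => (hmem k).integrable_mul (hmem l)) l
  rw [variance_fun_sub (hmem i) (hmem j), hmoment, hmoment, hmoment,
    covariance_self (hmem i).aemeasurable, covariance_self (hmem j).aemeasurable]
  ring

variable [Nonempty ι]

lemma integrable_smoothMax [IsFiniteMeasure μ] (hμ : Integrable id μ) {β : ℝ} (hβ : 0 < β) :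
    Integrable (smoothMax β) μ := by
  have hsup : Integrable (fun x : ι → ℝ => ⨆ i, x i) μ := integrable_iSup fun i => hμ.eval i
  have hcont : Continuous (smoothMax β : (ι → ℝ) → ℝ) :=
    continuous_iff_continuousAt.2 fun x => (hasFDerivAt_smoothMax hβ.ne' x).continuousAt
  exact integrable_of_le_of_le hcont.aestronglyMeasurable
    (ae_of_all _ (iSup_le_smoothMax hβ)) (ae_of_all _ (smoothMax_le hβ)) hsup
    (hsup.add (integrable_const _))

variable [IsGaussian μ] [IsGaussian ν]

lemma hasDerivAt_integral_smoothMax_rotation (hμ0 : ∫ x, x ∂μ = 0) (hν0 : ∫ x, x ∂ν = 0) {β : ℝ}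
    (hβ : β ≠ 0) {D : ι → ι → ℝ} (hD : ∀ i, D i = ∫ y, y i • y ∂ν - ∫ x, x i • x ∂μ) (θ : ℝ) :
    HasDerivAt (fun θ => ∫ p, smoothMax β (rotation θ p).1 ∂μ.prod ν)
      (sin θ * cos θ * ∑ i, ∫ p, β * gibbsWeight β (rotation θ p).1 i *
        (D i i - gibbsMean β (rotation θ p).1 (D i)) ∂μ.prod ν) θ := by
  have hfst : Continuous fun p : (ι → ℝ) × (ι → ℝ) => (rotation θ p).1 := by fun_prop
  convert! hasDerivAt_integral_comp_rotation (IsGaussian.integrable_id (μ := μ.prod ν))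
    (hasFDerivAt_smoothMax hβ) (continuous_gibbsMean β) (norm_gibbsMean_le_one β) θ using 1
  have hcoord (i : ι) : Integrable (fun p : (ι → ℝ) × (ι → ℝ) =>
      gibbsWeight β (rotation θ p).1 i * (rotation θ p).2 i) (μ.prod ν) := by
    have hlin : Integrable (fun p : (ι → ℝ) × (ι → ℝ) => (rotation θ p).2 i) (μ.prod ν) :=
      (ContinuousLinearMap.proj i ∘L ContinuousLinearMap.snd ℝ (ι → ℝ) (ι → ℝ) ∘L
        rotation θ).integrable_comp IsGaussian.integrable_fun_id
    exact hlin.bdd_mul (c := 1) ((continuous_gibbsWeight β i).comp hfst).aestronglyMeasurable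
      (ae_of_all _ fun p => abs_gibbsWeight_le_one _ _ _)
  simp_rw [gibbsMean_apply β _ (rotation θ _).2]
  rw [integral_finsetSum _ fun i _ => hcoord i, Finset.mul_sum]
  refine Finset.sum_congr rfl fun i _ => ?_
  have hderiv : Continuous fun x : ι → ℝ =>
      (β * gibbsWeight β x i) • (ContinuousLinearMap.proj i - gibbsMean β x) :=
    ((continuous_gibbsWeight β i).const_mul β).smul
      (continuous_const.sub (continuous_gibbsMean β))
  have hparts := integral_dual_snd_rotation_mul_comp_fst hμ0 hν0 (ContinuousLinearMap.proj i)
    (fun x => hasFDerivAt_gibbsWeight β x i) hderiv (fun x => abs_gibbsWeight_le_one β x i)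
    (fun x => norm_gibbsWeight_smul_proj_sub_gibbsMean_le β x i) θ
  simp_rw [ContinuousLinearMap.proj_apply, ← hD] at hparts
  simp_rw [mul_comm (gibbsWeight β _ i), hparts]
  rfl

lemma sum_integral_gibbsWeight_mul_nonneg {Ω : Type*} [MeasurableSpace Ω] {P : Measure Ω}
    [IsFiniteMeasure P] {Z : Ω → ι → ℝ} (hZ : AEMeasurable Z P) {β : ℝ} (hβ : 0 ≤ β)
    {D : ι → ι → ℝ} (hD : ∀ i j, 0 ≤ D i i + D j j - 2 * D i j) :
    0 ≤ ∑ i, ∫ ω, β * gibbsWeight β (Z ω) i * (D i i - gibbsMean β (Z ω) (D i)) ∂P := by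
  have hint (i : ι) : Integrable
      (fun ω => β * gibbsWeight β (Z ω) i * (D i i - gibbsMean β (Z ω) (D i))) P := by
    have hcont : Continuous fun x : ι → ℝ =>
        β * gibbsWeight β x i * (D i i - gibbsMean β x (D i)) :=
      ((continuous_gibbsWeight β i).const_mul β).mul
        (continuous_const.sub ((continuous_gibbsMean β).clm_apply continuous_const))
    exact .of_bound (hcont.measurable.comp_aemeasurable hZ).aestronglyMeasurable _
      (ae_of_all _ fun ω => ContinuousLinearMap.le_of_opNorm_le _
        (norm_gibbsWeight_smul_proj_sub_gibbsMean_le β (Z ω) i) (D i))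
  rw [← integral_finsetSum _ fun i _ => hint i]
  refine integral_nonneg fun ω => ?_
  simp_rw [mul_assoc, ← Finset.mul_sum, sum_gibbsWeight_mul_sub_gibbsMean]
  refine mul_nonneg hβ (div_nonneg (Finset.sum_nonneg fun i _ => Finset.sum_nonneg fun j _ => ?_)
    zero_le_two)
  exact mul_nonneg (mul_nonneg (gibbsWeight_nonneg β _ i) (gibbsWeight_nonneg β _ j)) (hD i j)

lemma integral_smoothMax_mono (hμ0 : ∫ x, x ∂μ = 0) (hν0 : ∫ x, x ∂ν = 0)
    (hvar : ∀ i j, Var[fun x => x i - x j; μ] ≤ Var[fun x => x i - x j; ν]) {β : ℝ} (hβ : 0 < β) :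
    ∫ x, smoothMax β x ∂μ ≤ ∫ x, smoothMax β x ∂ν := by
  set D : ι → ι → ℝ := fun i => ∫ y, y i • y ∂ν - ∫ x, x i • x ∂μ
  have hD (i j : ι) : 0 ≤ D i i + D j j - 2 * D i j := by
    have h := hvar i j
    rw [variance_eval_sub_eval IsGaussian.memLp_two_id hμ0,
      variance_eval_sub_eval IsGaussian.memLp_two_id hν0] at h
    simp only [D, Pi.sub_apply]
    linarith
  have hderiv := hasDerivAt_integral_smoothMax_rotation hμ0 hν0 hβ.ne' (D := D) fun _ => rfl
  have hmono : MonotoneOn (fun θ => ∫ p, smoothMax β (rotation θ p).1 ∂μ.prod ν)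
      (Icc 0 (π / 2)) := by
    refine monotoneOn_of_deriv_nonneg (convex_Icc _ _)
      (fun θ _ => (hderiv θ).continuousAt.continuousWithinAt)
      (fun θ _ => (hderiv θ).differentiableAt.differentiableWithinAt) fun θ hθ => ?_
    rw [interior_Icc] at hθ
    rw [(hderiv θ).deriv]
    refine mul_nonneg (mul_nonneg (sin_nonneg_of_nonneg_of_le_pi hθ.1.le ?_)
      (cos_nonneg_of_neg_pi_div_two_le_of_le ?_ hθ.2.le))
      (sum_integral_gibbsWeight_mul_nonneg (by fun_prop) hβ.le hD)
    · linarith [hθ.2, pi_pos]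
    · linarith [hθ.1, pi_pos]
  have hends := hmono (left_mem_Icc.2 pi_div_two_pos.le) (right_mem_Icc.2 pi_div_two_pos.le)
    pi_div_two_pos.le
  simpa [ContinuousLinearMap.rotation_apply, integral_fun_fst (μ := μ) (ν := ν) (smoothMax β),
    integral_fun_snd (μ := μ) (ν := ν) (smoothMax β)] using hends

lemma integral_iSup_mono_of_variance_sub_le (hμ0 : ∫ x, x ∂μ = 0) (hν0 : ∫ x, x ∂ν = 0)
    (hvar : ∀ i j, Var[fun x => x i - x j; μ] ≤ Var[fun x => x i - x j; ν]) :
    ∫ x, ⨆ i, x i ∂μ ≤ ∫ x, ⨆ i, x i ∂ν := by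
  have hsup (ρ : Measure (ι → ℝ)) [IsGaussian ρ] : Integrable (fun x => ⨆ i, x i) ρ :=
    integrable_iSup fun i => IsGaussian.integrable_id.eval i
  have happrox {β : ℝ} (hβ : 0 < β) :
      ∫ x, ⨆ i, x i ∂μ ≤ ∫ x, ⨆ i, x i ∂ν + log (Fintype.card ι) / β := calc
    ∫ x, ⨆ i, x i ∂μ ≤ ∫ x, smoothMax β x ∂μ :=
      integral_mono (hsup μ) (integrable_smoothMax IsGaussian.integrable_id hβ)
        (iSup_le_smoothMax hβ)
    _ ≤ ∫ x, smoothMax β x ∂ν := integral_smoothMax_mono hμ0 hν0 hvar hβ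
    _ ≤ ∫ x, (⨆ i, x i) + log (Fintype.card ι) / β ∂ν :=
      integral_mono (integrable_smoothMax IsGaussian.integrable_id hβ)
        ((hsup ν).add (integrable_const _)) (smoothMax_le hβ)
    _ = ∫ x, ⨆ i, x i ∂ν + log (Fintype.card ι) / β := by
      simp [integral_add (hsup ν) (integrable_const _)]
  have hlim : Tendsto (fun β : ℝ => ∫ x, ⨆ i, x i ∂ν + log (Fintype.card ι) / β) atTop
      (𝓝 (∫ x, ⨆ i, x i ∂ν + 0)) :=
    tendsto_const_nhds.add (tendsto_const_nhds.div_atTop tendsto_id)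
  rw [add_zero] at hlim
  exact ge_of_tendsto hlim ((eventually_gt_atTop 0).mono fun β hβ => happrox hβ)

end SudakovFernique

/-- The **Sudakov-Fernique inequality**. -/
theorem sudakov_fernique {Ω Ω' ι : Type*} [MeasurableSpace Ω] [MeasurableSpace Ω'] [Finite ι]
    [Nonempty ι] {P : Measure Ω} {P' : Measure Ω'} {X : Ω → ι → ℝ} {Y : Ω' → ι → ℝ}
    (hX : HasGaussianLaw X P) (hY : HasGaussianLaw Y P') (hX0 : ∀ i, ∫ ω, X ω i ∂P = 0)
    (hY0 : ∀ i, ∫ ω, Y ω i ∂P' = 0)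
    (hvar : ∀ i j, Var[fun ω => X ω i - X ω j; P] ≤ Var[fun ω => Y ω i - Y ω j; P']) :
    ∫ ω, ⨆ i, X ω i ∂P ≤ ∫ ω, ⨆ i, Y ω i ∂P' := by
  have := Fintype.ofFinite ι
  have hXG := hX.isGaussian_map
  have hYG := hY.isGaussian_map
  have key := integral_iSup_mono_of_variance_sub_le (integral_id_map_eq_zero hX.integrable hX0)
    (integral_id_map_eq_zero hY.integrable hY0) fun i j => by
      rw [variance_map (by fun_prop) hX.aemeasurable, variance_map (by fun_prop) hY.aemeasurable]
      exact hvar i j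
  have hsup : Measurable fun x : ι → ℝ => ⨆ i, x i := .iSup fun i => measurable_pi_apply i
  rwa [integral_map hX.aemeasurable hsup.aestronglyMeasurable,
    integral_map hY.aemeasurable hsup.aestronglyMeasurable] at key

section StandardGaussian

variable {α : Type*} [Fintype α]

lemma hasGaussianLaw_coord_stdGaussian :
    HasGaussianLaw (fun (x : EuclideanSpace ℝ α) a => x a) (stdGaussian (EuclideanSpace ℝ α)) :=
  IsGaussian.hasGaussianLaw_id.map
    (EuclideanSpace.equiv α ℝ).toContinuousLinearMap

lemma integrable_eval_stdGaussian (a : α) :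
    Integrable (fun x : EuclideanSpace ℝ α => x a) (stdGaussian (EuclideanSpace ℝ α)) :=
  (hasGaussianLaw_coord_stdGaussian.eval a).integrable

lemma integral_eval_stdGaussian (a : α) :
    ∫ x : EuclideanSpace ℝ α, x a ∂stdGaussian (EuclideanSpace ℝ α) = 0 :=
  integral_strongDual_stdGaussian (EuclideanSpace.proj a)

lemma variance_eval_sub_eval_stdGaussian {a b : α} (hab : a ≠ b) :
    Var[fun x : EuclideanSpace ℝ α => x a - x b; stdGaussian (EuclideanSpace ℝ α)] = 2 := by
  classical
  have hmem (c : α) : MemLp (fun x : EuclideanSpace ℝ α => x c) 2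
      (stdGaussian (EuclideanSpace ℝ α)) := (hasGaussianLaw_coord_stdGaussian.eval c).memLp_two
  rw [variance_fun_sub (hmem a) (hmem b), ← multivariateGaussian_zero_one,
    variance_eval_multivariateGaussian .one, variance_eval_multivariateGaussian .one,
    covariance_eval_multivariateGaussian .one]
  simp [hab, one_add_one_eq_two]

lemma integral_abs_eval_sub_eval_stdGaussian {a b : α} (hab : a ≠ b) :
    ∫ x : EuclideanSpace ℝ α, |x a - x b| ∂stdGaussian (EuclideanSpace ℝ α) = 2 / √π := by
  have hlaw : HasGaussianLaw (fun x : EuclideanSpace ℝ α => x a - x b)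
      (stdGaussian (EuclideanSpace ℝ α)) := (hasGaussianLaw_coord_stdGaussian.prodMk a b).fun_sub
  have hmap := hlaw.map_eq_gaussianReal
  rw [variance_eval_sub_eval_stdGaussian hab, integral_sub (integrable_eval_stdGaussian a)
    (integrable_eval_stdGaussian b), integral_eval_stdGaussian, integral_eval_stdGaussian,
    sub_zero] at hmap
  rw [← integral_map (f := fun y : ℝ => |y|) hlaw.aemeasurable (by fun_prop), hmap,
    integral_abs_gaussianReal, sqrt_div (by positivity)]
  congr 1
  rw [sqrt_eq_iff_mul_self_eq (by positivity) (by positivity)]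
  norm_num

lemma integrable_abs_eval_sub_eval_stdGaussian (a b : α) :
    Integrable (fun x : EuclideanSpace ℝ α => |x a - x b|) (stdGaussian (EuclideanSpace ℝ α)) :=
  ((integrable_eval_stdGaussian a).sub (integrable_eval_stdGaussian b)).abs

lemma integral_le_two_mul_integral_iSup_stdGaussian {F : EuclideanSpace ℝ α → ℝ}
    (hF : Integrable F (stdGaussian (EuclideanSpace ℝ α)))
    (hle : ∀ x, F x ≤ (⨆ a, x a) + ⨆ a, -x a) :
    ∫ x, F x ∂stdGaussian (EuclideanSpace ℝ α) ≤
      2 * ∫ x : EuclideanSpace ℝ α, ⨆ a, x a ∂stdGaussian (EuclideanSpace ℝ α) := by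
  have hsymm : MeasurePreserving (fun x : EuclideanSpace ℝ α => -x)
      (stdGaussian (EuclideanSpace ℝ α)) (stdGaussian (EuclideanSpace ℝ α)) :=
    ⟨measurable_neg, stdGaussian_map (LinearIsometryEquiv.neg ℝ)⟩
  have hsup := integrable_iSup (integrable_eval_stdGaussian (α := α))
  have hneg : Integrable (fun x : EuclideanSpace ℝ α => ⨆ a, -x a)
      (stdGaussian (EuclideanSpace ℝ α)) :=
    integrable_iSup fun a => (integrable_eval_stdGaussian a).neg
  have hswap : ∫ x : EuclideanSpace ℝ α, ⨆ a, -x a ∂stdGaussian (EuclideanSpace ℝ α) =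
      ∫ x : EuclideanSpace ℝ α, ⨆ a, x a ∂stdGaussian (EuclideanSpace ℝ α) :=
    hsymm.integral_comp (MeasurableEquiv.neg _).measurableEmbedding
      fun x : EuclideanSpace ℝ α => ⨆ a, x a
  calc ∫ x, F x ∂stdGaussian (EuclideanSpace ℝ α)
      ≤ ∫ x : EuclideanSpace ℝ α, (⨆ a, x a) + ⨆ a, -x a ∂stdGaussian (EuclideanSpace ℝ α) :=
        integral_mono hF (hsup.add hneg) hle
    _ = 2 * ∫ x : EuclideanSpace ℝ α, ⨆ a, x a ∂stdGaussian (EuclideanSpace ℝ α) := by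
        rw [integral_add hsup hneg, hswap, two_mul]

lemma abs_sub_le_iSup_add_iSup_neg {ι : Type*} [Finite ι] (x : ι → ℝ) (i j : ι) :
    |x i - x j| ≤ (⨆ k, x k) + ⨆ k, -x k := by
  have hpos (k : ι) : x k ≤ ⨆ k, x k := le_ciSup (finite_range x).bddAbove k
  have hneg (k : ι) : -x k ≤ ⨆ k, -x k := le_ciSup (finite_range fun k => -x k).bddAbove k
  exact abs_le.2 ⟨by linarith [hpos j, hneg i], by linarith [hpos i, hneg j]⟩

lemma sum_abs_sub_div_two_le_iSup_add_iSup_neg (x : Fin 3 → ℝ) :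
    (|x 0 - x 1| + |x 1 - x 2| + |x 2 - x 0|) / 2 ≤ (⨆ k, x k) + ⨆ k, -x k := by
  have h01 := abs_sub_le_iSup_add_iSup_neg x 0 1
  have h12 := abs_sub_le_iSup_add_iSup_neg x 1 2
  have h20 := abs_sub_le_iSup_add_iSup_neg x 2 0
  rcases abs_cases (x 0 - x 1) with h | h <;> rcases abs_cases (x 1 - x 2) with h' | h' <;>
    rcases abs_cases (x 2 - x 0) with h'' | h'' <;> linarith

lemma one_div_sqrt_pi_le_integral_iSup_stdGaussian [Nontrivial α] :
    1 / √π ≤ ∫ x : EuclideanSpace ℝ α, ⨆ a, x a ∂stdGaussian (EuclideanSpace ℝ α) := by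
  obtain ⟨a, b, hab⟩ := exists_pair_ne α
  have key := integral_le_two_mul_integral_iSup_stdGaussian
    (integrable_abs_eval_sub_eval_stdGaussian a b) fun x => abs_sub_le_iSup_add_iSup_neg x a b
  rw [integral_abs_eval_sub_eval_stdGaussian hab] at key
  linarith [show 2 / √π = 2 * (1 / √π) by ring]

lemma three_div_two_div_sqrt_pi_le_integral_iSup_stdGaussian :
    3 / 2 / √π ≤
      ∫ x : EuclideanSpace ℝ (Fin 3), ⨆ a, x a ∂stdGaussian (EuclideanSpace ℝ (Fin 3)) := by
  have hint := integrable_abs_eval_sub_eval_stdGaussian (α := Fin 3)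
  have key := integral_le_two_mul_integral_iSup_stdGaussian
    ((((hint 0 1).add (hint 1 2)).add (hint 2 0)).div_const 2) fun x =>
      sum_abs_sub_div_two_le_iSup_add_iSup_neg x
  rw [integral_div, integral_add' ((hint 0 1).add (hint 1 2)) (hint 2 0),
    integral_add' (hint 0 1) (hint 1 2), integral_abs_eval_sub_eval_stdGaussian (by decide),
    integral_abs_eval_sub_eval_stdGaussian (by decide),
    integral_abs_eval_sub_eval_stdGaussian (by decide)] at key
  linarith [show 3 / 2 / √π = 3 / 4 * (2 / √π) by ring]

end StandardGaussian

section WordSum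

variable {J α Ω : Type*} [Fintype J] [MeasurableSpace Ω] {P : Measure Ω} {Z : Ω → α → ℝ}

/-- The process indexed by words `v : J → α` obtained by adding up, over the positions `j`, the
values at the letters `v j` of independent copies of the process `Z`: the copies are realised on
the power `Measure.pi fun _ : J => P` of the probability space of `Z`. -/
def wordSum (Z : Ω → α → ℝ) (g : J → Ω) (v : J → α) : ℝ := ∑ j, Z (g j) (v j)

lemma iSup_sum_pi_eq_sum_iSup [Finite α] [Nonempty α] (f : J → α → ℝ) :
    ⨆ v : J → α, ∑ j, f j (v j) = ∑ j, ⨆ a, f j a := by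
  have hbdd (j : J) : BddAbove (range (f j)) := (finite_range (f j)).bddAbove
  refine le_antisymm (ciSup_le fun v => Finset.sum_le_sum fun j _ => le_ciSup (hbdd j) (v j)) ?_
  choose v hv using fun j => exists_eq_ciSup_of_finite (f := f j)
  simp_rw [← hv]
  exact le_ciSup (f := fun v : J → α => ∑ j, f j (v j)) (finite_range _).bddAbove v

variable [IsProbabilityMeasure P]

lemma integral_iSup_wordSum [Finite α] [Nonempty α] (hZ : ∀ a, Integrable (fun ω => Z ω a) P) :
    ∫ g, ⨆ v, wordSum Z g v ∂Measure.pi (fun _ : J => P) =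
      Fintype.card J * ∫ ω, ⨆ a, Z ω a ∂P := by
  have hsup := integrable_iSup hZ
  have hsplit (g : J → Ω) : ⨆ v, wordSum Z g v = ∑ j, ⨆ a, Z (g j) a :=
    iSup_sum_pi_eq_sum_iSup fun j a => Z (g j) a
  simp_rw [hsplit]
  rw [integral_finsetSum _ fun j _ => integrable_comp_eval (μ := fun _ => P) hsup]
  simp_rw [integral_comp_eval (μ := fun _ : J => P) hsup.aestronglyMeasurable]
  simp

lemma integral_wordSum (hZ : ∀ a, Integrable (fun ω => Z ω a) P) (hZ0 : ∀ a, ∫ ω, Z ω a ∂P = 0)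
    (v : J → α) : ∫ g, wordSum Z g v ∂Measure.pi (fun _ => P) = 0 := by
  simp_rw [wordSum]
  rw [integral_finsetSum _ fun j _ => integrable_comp_eval (μ := fun _ => P) (hZ (v j))]
  refine Finset.sum_eq_zero fun j _ => ?_
  exact (integral_comp_eval (μ := fun _ => P) (hZ (v j)).aestronglyMeasurable).trans (hZ0 (v j))

lemma variance_wordSum_sub (hZ : ∀ a, MemLp (fun ω => Z ω a) 2 P) (v w : J → α) :
    Var[fun g => wordSum Z g v - wordSum Z g w; Measure.pi fun _ => P] =
      ∑ j, Var[fun ω => Z ω (v j) - Z ω (w j); P] := by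
  have hsum := variance_sum_pi (μ := fun _ => P) fun j => (hZ (v j)).sub (hZ (w j))
  convert! hsum using 2
  ext g
  simp [wordSum]

lemma hasGaussianLaw_wordSum [Finite α] (hZ : HasGaussianLaw Z P) :
    HasGaussianLaw (fun (g : J → Ω) v => wordSum Z g v) (Measure.pi fun _ => P) := by
  classical
  have := Fintype.ofFinite α
  have hletter (j : J) : HasGaussianLaw (fun ω (v : J → α) => Z ω (v j)) P :=
    hZ.map_fun (.pi fun v : J → α => .proj (v j))
  have hcopy (j : J) : HasGaussianLaw (fun (g : J → Ω) (v : J → α) => Z (g j) (v j))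
      (Measure.pi fun _ => P) := by
    have heval := measurePreserving_eval (fun _ : J => P) j
    have hmeas := (hletter j).aemeasurable
    have hgauss := (hletter j).isGaussian_map
    rw [← heval.map_eq] at hmeas hgauss
    rw [AEMeasurable.map_map_of_aemeasurable hmeas heval.aemeasurable] at hgauss
    exact ⟨hgauss⟩
  have hsum := (iIndepFun_pi fun j => (hletter j).aemeasurable).hasGaussianLaw_fun_sum hcopy
  convert! hsum using 3 with _ v
  simp [wordSum]

end WordSum

/-- Sudakov's minoration, by comparison with the word sum of a standard Gaussian vector. -/
theorem le_integral_iSup_of_le_variance_sub {J α Ω : Type*} [Fintype J] [Fintype α] [Nonempty α]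
    [MeasurableSpace Ω] {P : Measure Ω} {X : Ω → (J → α) → ℝ} (hX : HasGaussianLaw X P)
    (hX0 : ∀ v, ∫ ω, X ω v ∂P = 0) {b : ℝ} (hb : 0 ≤ b)
    (hsep : ∀ v w, v ≠ w → 2 * Fintype.card J * b ^ 2 ≤ Var[fun ω => X ω v - X ω w; P]) :
    b * (Fintype.card J *
        ∫ x : EuclideanSpace ℝ α, ⨆ a, x a ∂stdGaussian (EuclideanSpace ℝ α)) ≤
      ∫ ω, ⨆ v, X ω v ∂P := by
  classical
  let Z : EuclideanSpace ℝ α → α → ℝ := fun x a => x a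
  have hZ : HasGaussianLaw Z (stdGaussian (EuclideanSpace ℝ α)) := hasGaussianLaw_coord_stdGaussian
  have hY : HasGaussianLaw (fun (g : J → EuclideanSpace ℝ α) v => b * wordSum Z g v)
      (Measure.pi fun _ => stdGaussian (EuclideanSpace ℝ α)) :=
    (hasGaussianLaw_wordSum hZ).fun_smul b
  rw [← integral_iSup_wordSum (Z := Z) fun a => (hZ.eval a).integrable, ← integral_const_mul]
  simp_rw [Real.mul_iSup_of_nonneg hb]
  refine sudakov_fernique hY hX (fun v => ?_) hX0 fun v w => ?_
  · rw [integral_const_mul, integral_wordSum (fun a => (hZ.eval a).integrable)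
      integral_eval_stdGaussian, mul_zero]
  by_cases hvw : v = w
  · simp [hvw, ← Pi.zero_def]
  refine le_trans ?_ (hsep v w hvw)
  have hletter (a c : α) : Var[fun x => Z x a - Z x c; stdGaussian (EuclideanSpace ℝ α)] ≤ 2 := by
    by_cases hac : a = c
    · simp [hac, ← Pi.zero_def]
    · exact (variance_eval_sub_eval_stdGaussian hac).le
  simp_rw [← mul_sub]
  calc Var[fun g => b * (wordSum Z g v - wordSum Z g w);
        Measure.pi fun _ => stdGaussian (EuclideanSpace ℝ α)]
      = b ^ 2 * ∑ j, Var[fun x => Z x (v j) - Z x (w j); stdGaussian (EuclideanSpace ℝ α)] := by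
        rw [variance_const_mul, variance_wordSum_sub fun a => (hZ.eval a).memLp_two]
    _ ≤ b ^ 2 * ∑ _j : J, 2 := by
        gcongr
        exact hletter _ _
    _ = 2 * Fintype.card J * b ^ 2 := by
        rw [Finset.sum_const, Finset.card_univ, nsmul_eq_mul]
        ring

section CenteredGaussianProcess

variable {Ω : Type} [MeasurableSpace Ω] {μ : Measure Ω} {X : ℝ → Ω → ℝ} {S : Set ℝ}

lemma IsCenteredGaussianOn.exists_map_sum_eq (h : IsCenteredGaussianOn μ X S) {ι : Type*}
    [Fintype ι] (c : ι → ℝ) {t : ι → ℝ} (ht : ∀ i, t i ∈ S) :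
    ∃ v : NNReal, μ.map (fun ω => ∑ i, c i * X (t i) ω) = gaussianReal 0 v := by
  let e := (Fintype.equivFin ι).symm
  obtain ⟨v, hv⟩ := h.2 _ (c ∘ e) (t ∘ e) fun i => ht _
  refine ⟨v, hv ▸ ?_⟩
  congr with ω
  exact (e.sum_comp fun i => c i * X (t i) ω).symm

lemma IsCenteredGaussianOn.hasGaussianLaw (h : IsCenteredGaussianOn μ X S) {ι : Type*}
    [Finite ι] {t : ι → ℝ} (ht : ∀ i, t i ∈ S) : HasGaussianLaw (fun ω i => X (t i) ω) μ := by
  classical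
  have := Fintype.ofFinite ι
  have hmeas : Measurable fun ω i => X (t i) ω := measurable_pi_lambda _ fun i => h.1 _ (ht i)
  refine ⟨isGaussian_of_map_eq_gaussianReal fun L => ?_⟩
  obtain ⟨v, hv⟩ := h.exists_map_sum_eq (fun i => L (Pi.single i 1)) ht
  refine ⟨0, v, ?_⟩
  rw [← hv, Measure.map_map L.continuous.measurable hmeas]
  congr with ω
  rw [Function.comp_apply, ← Finset.univ_sum_single (fun i => X (t i) ω), map_sum]
  refine Finset.sum_congr rfl fun i _ => ?_
  rw [mul_comm, ← smul_eq_mul, ← map_smul, ← Pi.single_smul, smul_eq_mul, mul_one]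

lemma IsCenteredGaussianOn.integral_eq_zero (h : IsCenteredGaussianOn μ X S) {t : ℝ}
    (ht : t ∈ S) : ∫ ω, X t ω ∂μ = 0 := by
  obtain ⟨v, hv⟩ := h.exists_map_sum_eq (fun _ : Unit => 1) fun _ => ht
  simp only [Finset.univ_unique, one_mul, Finset.sum_const, Finset.card_singleton, one_smul] at hv
  rw [← integral_map (f := fun x : ℝ => x) (h.1 t ht).aemeasurable (by fun_prop), hv,
    integral_id_gaussianReal]

lemma IsCenteredGaussianOn.variance_sub_eq_sq_l2norm (h : IsCenteredGaussianOn μ X S) {s t : ℝ}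
    (hs : s ∈ S) (ht : t ∈ S) :
    Var[fun ω => X t ω - X s ω; μ] = l2norm μ (fun ω => X t ω - X s ω) ^ 2 := by
  have hint {r : ℝ} (hr : r ∈ S) : Integrable (X r) μ :=
    ((h.hasGaussianLaw fun _ : Unit => hr).eval ()).integrable
  rw [l2norm, sq_sqrt (integral_nonneg fun ω => sq_nonneg _),
    variance_of_integral_eq_zero (X := fun ω => X t ω - X s ω)
      ((h.1 t ht).sub (h.1 s hs)).aemeasurable]
  rw [integral_sub (hint ht) (hint hs), h.integral_eq_zero ht, h.integral_eq_zero hs, sub_zero]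

lemma IsCenteredGaussianOn.integral_iSup_le_expMax (h : IsCenteredGaussianOn μ X (Icc 0 1))
    (hbdd : ∀ᵐ ω ∂μ, BddAbove (range fun t : Icc (0 : ℝ) 1 => X t.1 ω))
    (hint : Integrable (fun ω => ⨆ t : Icc (0 : ℝ) 1, X t.1 ω) μ)
    {ι : Type*} [Finite ι] [Nonempty ι] {t : ι → ℝ} (ht : ∀ i, t i ∈ Icc (0 : ℝ) 1) :
    ∫ ω, ⨆ i, X (t i) ω ∂μ ≤ expMax μ X := by
  refine integral_mono_ae (integrable_iSup fun i => ((h.hasGaussianLaw ht).eval i).integrable)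
    hint ?_
  filter_upwards [hbdd] with ω hω
  exact ciSup_le fun i => le_ciSup hω ⟨t i, ht i⟩

lemma exists_mem_unitInterval_inv_card_sub_one_le_abs_sub (ι : Type*) [Fintype ι] :
    ∃ t : ι → ℝ, (∀ i, t i ∈ Icc (0 : ℝ) 1) ∧
      ∀ i j, i ≠ j → ((Fintype.card ι : ℝ) - 1)⁻¹ ≤ |t i - t j| := by
  let k : ι → ℕ := fun i => Fintype.equivFin ι i
  have hk (i : ι) : (k i : ℝ) ≤ Fintype.card ι - 1 := by
    rw [le_sub_iff_add_le]
    exact_mod_cast (Fintype.equivFin ι i).2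
  have hdist (i j : ι) (hij : i ≠ j) : 1 ≤ |(k i : ℝ) - k j| := by
    rw [← Real.dist_eq, Nat.dist_cast_real]
    exact Nat.pairwise_one_le_dist fun h => hij ((Fintype.equivFin ι).injective (Fin.ext h))
  have hcard (i : ι) : (0 : ℝ) ≤ Fintype.card ι - 1 := (Nat.cast_nonneg _).trans (hk i)
  refine ⟨fun i => k i / (Fintype.card ι - 1), fun i => ?_, fun i j hij => ?_⟩
  · exact ⟨div_nonneg (Nat.cast_nonneg _) (hcard i), div_le_one_of_le₀ (hk i) (hcard i)⟩
  · rw [← sub_div, abs_div, abs_of_nonneg (hcard i), inv_eq_one_div]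
    exact div_le_div_of_nonneg_right (hdist i j hij) (hcard i)

lemma IsCenteredGaussianOn.mul_integral_iSup_stdGaussian_le_expMax
    (h : IsCenteredGaussianOn μ X (Icc 0 1)) {C H : ℝ} (hC : 0 ≤ C) (hH : 0 ≤ H)
    (hlow : ∀ s ∈ Icc (0 : ℝ) 1, ∀ t ∈ Icc (0 : ℝ) 1,
      C * |t - s| ^ H ≤ l2norm μ (fun ω => X t ω - X s ω))
    (hbdd : ∀ᵐ ω ∂μ, BddAbove (range fun t : Icc (0 : ℝ) 1 => X t.1 ω))
    (hint : Integrable (fun ω => ⨆ t : Icc (0 : ℝ) 1, X t.1 ω) μ)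
    (J α : Type*) [Fintype J] [Nonempty J] [Fintype α] [Nonempty α] :
    C / ((Fintype.card α : ℝ) ^ Fintype.card J - 1) ^ H * (√(Fintype.card J / 2) *
        ∫ x : EuclideanSpace ℝ α, ⨆ a, x a ∂stdGaussian (EuclideanSpace ℝ α)) ≤
      expMax μ X := by
  classical
  obtain ⟨t, ht, hsep⟩ := exists_mem_unitInterval_inv_card_sub_one_le_abs_sub (J → α)
  rw [Fintype.card_fun, Nat.cast_pow] at hsep
  set n : ℝ := (Fintype.card α : ℝ) ^ Fintype.card J - 1
  have hn : 0 ≤ n := sub_nonneg.2 (one_le_pow₀ (by exact_mod_cast Fintype.card_pos))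
  have hinc (v w : J → α) (hvw : v ≠ w) :
      C / n ^ H ≤ l2norm μ fun ω => X (t v) ω - X (t w) ω := calc
    C / n ^ H = C * n⁻¹ ^ H := by rw [inv_rpow hn, div_eq_mul_inv]
    _ ≤ C * |t v - t w| ^ H := by
      gcongr
      exact hsep v w hvw
    _ ≤ l2norm μ fun ω => X (t v) ω - X (t w) ω := hlow _ (ht w) _ (ht v)
  have key := le_integral_iSup_of_le_variance_sub (h.hasGaussianLaw ht)
    (fun v => h.integral_eq_zero (ht v)) (b := C / n ^ H / √(2 * Fintype.card J))
    (by positivity) fun v w hvw => by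
      rw [h.variance_sub_eq_sq_l2norm (ht w) (ht v), div_pow, sq_sqrt (by positivity),
        mul_div_cancel₀ _ (by positivity)]
      exact pow_le_pow_left₀ (by positivity) (hinc v w hvw) 2
  refine (le_of_eq ?_).trans (key.trans (h.integral_iSup_le_expMax hbdd hint ht))
  have hsqrt : √(Fintype.card J / 2) = Fintype.card J / √(2 * Fintype.card J) := by
    rw [eq_div_iff (by positivity), ← sqrt_mul (by positivity),
      sqrt_eq_iff_mul_self_eq (by positivity) (by positivity)]
    ring
  rw [hsqrt]
  ring

end CenteredGaussianProcess

section HolderLowerBound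

variable {Ω : Type} [MeasurableSpace Ω] {μ : Measure Ω} {X : ℝ → Ω → ℝ} {C H : ℝ}

lemma exp_one_mul_log_two_gt : 1.88 < rexp 1 * Real.log 2 := by
  nlinarith [exp_one_gt_d9, log_two_gt_d9]

lemma four_mul_pi_mul_exp_one_mul_log_two_lt : 4 * π * (rexp 1 * Real.log 2) < 25 := by
  have hlog : rexp 1 * Real.log 2 < 1.9 := by
    nlinarith [exp_one_lt_d9, log_two_lt_d9, exp_pos 1]
  nlinarith [pi_lt_d2, pi_pos]

lemma exists_three_rpow_le (hH0 : 0 < H) (hH : H ≤ 1 / 2) :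
    ∃ m : ℕ, 0 < m ∧
      (3 : ℝ) ^ (2 * m * H) ≤ 9 / 4 * (rexp 1 * Real.log 2) * (2 * m * H) := by
  have hm : 1 ≤ ⌊1 / (2 * H)⌋₊ := by
    rw [Nat.one_le_floor_iff, one_le_div (by positivity)]
    linarith
  refine ⟨⌊1 / (2 * H)⌋₊, hm, ?_⟩
  set r : ℝ := ((⌊1 / (2 * H)⌋₊ : ℕ) : ℝ)
  have hr : 1 ≤ r := Nat.one_le_cast.2 hm
  have hle : r * (2 * H) ≤ 1 := (le_div_iff₀ (by positivity)).1 (Nat.floor_le (by positivity))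
  have hlt : 1 < (r + 1) * (2 * H) := (div_lt_iff₀ (by positivity)).1 (Nat.lt_floor_add_one _)
  have hhalf : 1 / 2 ≤ 2 * r * H := by nlinarith
  have hchord : (3 : ℝ) ^ (2 * r * H) ≤ 1 + 2 * r * H * 2 := by
    convert rpow_one_add_le_one_add_mul_self (s := 2) (by norm_num)
      (by linarith : 0 ≤ 2 * r * H) (by linarith) using 2
    norm_num
  nlinarith [exp_one_mul_log_two_gt]

theorem IsCenteredGaussianOn.div_sqrt_two_mul_pi_le_expMax
    (h : IsCenteredGaussianOn μ X (Icc 0 1)) (hC : 0 ≤ C) (hH : 0 ≤ H)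
    (hlow : ∀ s ∈ Icc (0 : ℝ) 1, ∀ t ∈ Icc (0 : ℝ) 1,
      C * |t - s| ^ H ≤ l2norm μ (fun ω => X t ω - X s ω))
    (hbdd : ∀ᵐ ω ∂μ, BddAbove (range fun t : Icc (0 : ℝ) 1 => X t.1 ω))
    (hint : Integrable (fun ω => ⨆ t : Icc (0 : ℝ) 1, X t.1 ω) μ) :
    C / √(2 * π) ≤ expMax μ X := calc
  C / √(2 * π) = C * (√(1 / 2) * (1 / √π)) := by
    rw [sqrt_mul zero_le_two, sqrt_div zero_le_one, sqrt_one]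
    ring
  _ ≤ C * (√(1 / 2) *
      ∫ x : EuclideanSpace ℝ Bool, ⨆ a, x a ∂stdGaussian (EuclideanSpace ℝ Bool)) := by
    gcongr
    exact one_div_sqrt_pi_le_integral_iSup_stdGaussian
  _ ≤ expMax μ X := by
    convert h.mul_integral_iSup_stdGaussian_le_expMax hC hH hlow hbdd hint Unit Bool using 3
    · norm_num
    · norm_num

theorem IsCenteredGaussianOn.three_div_two_mul_div_rpow_le_expMax
    (h : IsCenteredGaussianOn μ X (Icc 0 1)) (hC : 0 ≤ C) (hH : 0 ≤ H)
    (hlow : ∀ s ∈ Icc (0 : ℝ) 1, ∀ t ∈ Icc (0 : ℝ) 1,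
      C * |t - s| ^ H ≤ l2norm μ (fun ω => X t ω - X s ω))
    (hbdd : ∀ᵐ ω ∂μ, BddAbove (range fun t : Icc (0 : ℝ) 1 => X t.1 ω))
    (hint : Integrable (fun ω => ⨆ t : Icc (0 : ℝ) 1, X t.1 ω) μ) {m : ℕ} (hm : 0 < m) :
    C / 3 ^ (m * H) * (√(m / 2) * (3 / 2 / √π)) ≤ expMax μ X := by
  have : Nonempty (Fin m) := Fin.pos_iff_nonempty.1 hm
  have key := h.mul_integral_iSup_stdGaussian_le_expMax hC hH hlow hbdd hint (Fin m) (Fin 3)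
  rw [Fintype.card_fin, Fintype.card_fin, Nat.cast_ofNat] at key
  have hpow : (1 : ℝ) < 3 ^ m := one_lt_pow₀ (by norm_num) hm.ne'
  have hdist : ((3 : ℝ) ^ m - 1) ^ H ≤ 3 ^ (m * H) := by
    rw [rpow_mul zero_le_three, rpow_natCast]
    exact rpow_le_rpow (by linarith) (by linarith) hH
  refine le_trans ?_ key
  have := rpow_pos_of_pos (sub_pos.2 hpow) H
  gcongr
  exact three_div_two_div_sqrt_pi_le_integral_iSup_stdGaussian

theorem IsCenteredGaussianOn.div_sqrt_le_expMax
    (h : IsCenteredGaussianOn μ X (Icc 0 1)) (hC : 0 ≤ C) (hH : 0 < H)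
    (hlow : ∀ s ∈ Icc (0 : ℝ) 1, ∀ t ∈ Icc (0 : ℝ) 1,
      C * |t - s| ^ H ≤ l2norm μ (fun ω => X t ω - X s ω))
    (hbdd : ∀ᵐ ω ∂μ, BddAbove (range fun t : Icc (0 : ℝ) 1 => X t.1 ω))
    (hint : Integrable (fun ω => ⨆ t : Icc (0 : ℝ) 1, X t.1 ω) μ) :
    C / √(4 * H * π * rexp 1 * Real.log 2) ≤ expMax μ X := by
  have := log_pos one_lt_two
  rcases le_or_gt H (1 / 2) with hH2 | hH2
  · obtain ⟨m, hm, hle⟩ := exists_three_rpow_le hH hH2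
    refine le_trans ?_ (h.three_div_two_mul_div_rpow_le_expMax hC hH.le hlow hbdd hint hm)
    have hsq : ((3 : ℝ) ^ (m * H)) ^ 2 ≤
        (√(m / 2) * (3 / 2 / √π) * √(4 * H * π * rexp 1 * Real.log 2)) ^ 2 := calc
      ((3 : ℝ) ^ (m * H)) ^ 2 = 3 ^ (2 * m * H) := by
        rw [← rpow_mul_natCast zero_le_three]
        congr 1
        push_cast
        ring
      _ ≤ 9 / 4 * (rexp 1 * Real.log 2) * (2 * m * H) := hle
      _ = (√(m / 2) * (3 / 2 / √π) * √(4 * H * π * rexp 1 * Real.log 2)) ^ 2 := by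
        rw [mul_pow, mul_pow, div_pow _ √π, sq_sqrt (by positivity), sq_sqrt (by positivity),
          sq_sqrt (by positivity)]
        field_simp
        ring
    rw [div_mul_eq_mul_div, div_le_div_iff₀ (by positivity) (by positivity), mul_assoc]
    exact mul_le_mul_of_nonneg_left (le_of_sq_le_sq hsq (by positivity)) hC
  · refine le_trans ?_ (h.div_sqrt_two_mul_pi_le_expMax hC hH.le hlow hbdd hint)
    refine div_le_div_of_nonneg_left hC (by positivity) (sqrt_le_sqrt ?_)
    have hone : 1 ≤ 2 * H * (rexp 1 * Real.log 2) := by nlinarith [exp_one_mul_log_two_gt]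
    nlinarith [pi_pos]

end HolderLowerBound

theorem stmt0_general {Ω : Type} [MeasurableSpace Ω] {μ : Measure Ω} {X : ℝ → Ω → ℝ} {C H : ℝ}
    (hC : 0 < C) (hH : 0 < H) (hgauss : IsCenteredGaussianOn μ X (Icc 0 1))
    (hlow : ∀ s ∈ Icc (0 : ℝ) 1, ∀ t ∈ Icc (0 : ℝ) 1,
      C * |t - s| ^ H ≤ l2norm μ (fun ω => X t ω - X s ω))
    (hbdd : ∀ᵐ ω ∂μ, BddAbove (range fun t : Icc (0 : ℝ) 1 => X t.1 ω))
    (hint : Integrable (fun ω => ⨆ t : Icc (0 : ℝ) 1, X t.1 ω) μ) :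
    C / √(4 * H * π * rexp 1 * Real.log 2) ≤ expMax μ X ∧ C / (5 * √H) < expMax μ X := by
  have hbound := hgauss.div_sqrt_le_expMax hC.le hH hlow hbdd hint
  have := log_pos one_lt_two
  refine ⟨hbound, hbound.trans_lt' (div_lt_div_of_pos_left hC (by positivity) ?_)⟩
  calc √(4 * H * π * rexp 1 * Real.log 2) < √(5 ^ 2 * H) :=
      sqrt_lt_sqrt (by positivity) (by nlinarith [four_mul_pi_mul_exp_one_mul_log_two_lt])
    _ = 5 * √H := by rw [sqrt_mul (by positivity), sqrt_sq (by positivity)]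

/-- lower bound for the expected supremum of a centered Gaussian
process whose increments satisfy `‖X_t - X_s‖₂ ≥ C |t-s|^H`. -/
theorem stmt0 {Ω : Type} [MeasurableSpace Ω] (μ : Measure Ω) [IsProbabilityMeasure μ]
    (X : ℝ → Ω → ℝ) (C H : ℝ) (hC : 0 < C) (hH : H ∈ Ioo (0:ℝ) 1)
    (hgauss : IsCenteredGaussianOn μ X (Icc 0 1))
    (hlow : ∀ s ∈ Icc (0:ℝ) 1, ∀ t ∈ Icc (0:ℝ) 1,
      C * |t - s| ^ H ≤ l2norm μ (fun ω => X t ω - X s ω))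
    (hbdd : ∀ᵐ ω ∂μ, BddAbove (Set.range fun t : Icc (0:ℝ) 1 => X t.1 ω))
    (hint : Integrable (fun ω => ⨆ t : Icc (0:ℝ) 1, X t.1 ω) μ) :
    C / Real.sqrt (4 * H * π * Real.exp 1 * Real.log 2) ≤ expMax μ X ∧
      C / (5 * Real.sqrt H) < expMax μ X :=
  stmt0_general hC hH.1 hgauss hlow hbdd hint
end
end

section
/- Let X = (X_t)_{t∈[0,1]} be a centered Gaussian process with almost surely continuous sample paths. If there exist constants C > 0 and H ∈ (0,1) such that ‖X_t − X_s‖₂ ≤ C|t−s|^H for all t, s ∈ [0,1], then E[max_{0≤t≤1} X_t] < 16.3·C/√H. -/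
open MeasureTheory ProbabilityTheory Real Set Filter Topology

noncomputable section

/-!
Chaining along `b`-adic grids. The branching number `b` is adapted to the Hölder exponent, so that
`b ^ H` lies between `2` and `4`: increments from level `m` to level `m + 1` then have standard
deviation at most `C / 2 ^ m`, while the level has `b ^ (m + 1)` of them, whose logarithm is at
most `2 * (m + 1) / H`. The maximal inequality for sub-Gaussian variables bounds the expected
largest increment of the level by `C / √H * (m + 2) / 2 ^ m`, and these bounds sum to `6 * C / √H`.
-/

open scoped NNReal

section Integration

variable {Ω : Type*} [MeasurableSpace Ω] {μ : Measure Ω}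

lemma aemeasurable_iSup_of_ae_continuous {T E : Type*} [TopologicalSpace T]
    [TopologicalSpace.SeparableSpace T] [ConditionallyCompleteLinearOrder E] [TopologicalSpace E]
    [OrderTopology E] [SecondCountableTopology E] [MeasurableSpace E] [BorelSpace E]
    {X : T → Ω → E} (hX : ∀ t, AEMeasurable (X t) μ) (hcont : ∀ᵐ ω ∂μ, Continuous (X · ω)) :
    AEMeasurable (fun ω => ⨆ t, X t ω) μ := by
  obtain ⟨S, hS, hdense⟩ := TopologicalSpace.exists_countable_dense T
  have := hS.to_subtype
  refine (AEMeasurable.iSup fun s : S => hX s).congr ?_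
  filter_upwards [hcont] with ω hω using hdense.ciSup' hω

lemma integrable_iSup_of_finite {ι : Type*} [Finite ι] {Y : ι → Ω → ℝ}
    (hY : ∀ i, Integrable (Y i) μ) : Integrable (fun ω => ⨆ i, Y i ω) μ := by
  cases nonempty_fintype ι
  rcases isEmpty_or_nonempty ι with _ | _
  · simp
  refine (integrable_finsetSum Finset.univ fun i _ => (hY i).abs).mono'
    (AEMeasurable.iSup fun i => (hY i).aemeasurable).aestronglyMeasurable (ae_of_all _ fun ω => ?_)
  obtain ⟨i, hi⟩ := exists_eq_ciSup_of_finite (f := fun i => Y i ω)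
  rw [← hi, norm_eq_abs]
  exact Finset.single_le_sum (f := fun i => |Y i ω|) (fun _ _ => abs_nonneg _) (Finset.mem_univ i)

lemma integrable_and_integral_le_of_ofReal_le_tsum {Z : Ω → ℝ} {D : ℕ → Ω → ℝ} {e : ℕ → ℝ}
    {S : ℝ} (hZm : AEStronglyMeasurable Z μ) (hZ : 0 ≤ᵐ[μ] Z) (hDint : ∀ m, Integrable (D m) μ)
    (hD : ∀ m, 0 ≤ᵐ[μ] D m)
    (hZD : ∀ᵐ ω ∂μ, ENNReal.ofReal (Z ω) ≤ ∑' m, ENNReal.ofReal (D m ω))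
    (hDe : ∀ m, ∫ ω, D m ω ∂μ ≤ e m) (he : HasSum e S) :
    Integrable Z μ ∧ ∫ ω, Z ω ∂μ ≤ S := by
  have he0 (m : ℕ) : 0 ≤ e m := (integral_nonneg_of_ae (hD m)).trans (hDe m)
  have hlint : ∫⁻ ω, ENNReal.ofReal (Z ω) ∂μ ≤ ENNReal.ofReal S :=
    calc ∫⁻ ω, ENNReal.ofReal (Z ω) ∂μ
        ≤ ∫⁻ ω, ∑' m, ENNReal.ofReal (D m ω) ∂μ := lintegral_mono_ae hZD
      _ = ∑' m, ∫⁻ ω, ENNReal.ofReal (D m ω) ∂μ :=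
          lintegral_tsum fun m => (hDint m).aemeasurable.ennreal_ofReal
      _ ≤ ∑' m, ENNReal.ofReal (e m) := ENNReal.tsum_le_tsum fun m => by
          rw [← ofReal_integral_eq_lintegral_ofReal (hDint m) (hD m)]
          exact ENNReal.ofReal_le_ofReal (hDe m)
      _ = ENNReal.ofReal S := by rw [← ENNReal.ofReal_tsum_of_nonneg he0 he.summable, he.tsum_eq]
  refine ⟨⟨hZm, ?_⟩, ?_⟩
  · rw [hasFiniteIntegral_iff_ofReal hZ]
    exact hlint.trans_lt ENNReal.ofReal_lt_top
  · rw [integral_eq_lintegral_of_nonneg_ae hZ hZm]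
    exact ENNReal.toReal_le_of_le_ofReal (he.nonneg he0) hlint

end Integration

section Subgaussian

variable {Ω : Type*} [MeasurableSpace Ω] {μ : Measure Ω}

lemma hasSubgaussianMGF_of_le {Y : Ω → ℝ} {c d : ℝ≥0} (hY : HasSubgaussianMGF Y c μ)
    (hcd : c ≤ d) : HasSubgaussianMGF Y d μ where
  integrable_exp_mul := hY.integrable_exp_mul
  mgf_le t := (hY.mgf_le t).trans (by gcongr)

lemma hasSubgaussianMGF_id_gaussianReal (v : ℝ≥0) :
    HasSubgaussianMGF id v (gaussianReal 0 v) where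
  integrable_exp_mul := integrable_exp_mul_gaussianReal
  mgf_le t := by simp [mgf_id_gaussianReal]

lemma mul_integral_iSup_le_of_hasSubgaussianMGF [IsProbabilityMeasure μ] {ι : Type*} [Fintype ι]
    [Nonempty ι] {Y : ι → Ω → ℝ} {c : ℝ≥0} (hY : ∀ i, HasSubgaussianMGF (Y i) c μ) (l : ℝ) :
    l * ∫ ω, ⨆ i, Y i ω ∂μ ≤ log (Fintype.card ι) + c * l ^ 2 / 2 := by
  have hint : Integrable (fun ω => ⨆ i, Y i ω) μ :=
    integrable_iSup_of_finite fun i => (hY i).integrable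
  have hsum : Integrable (fun ω => ∑ i, exp (l * Y i ω)) μ :=
    integrable_finsetSum _ fun i _ => (hY i).integrable_exp_mul l
  have hle (ω : Ω) : exp (l * ⨆ i, Y i ω) ≤ ∑ i, exp (l * Y i ω) := by
    obtain ⟨i, hi⟩ := exists_eq_ciSup_of_finite (f := fun i => Y i ω)
    rw [← hi]
    exact Finset.single_le_sum (f := fun i => exp (l * Y i ω)) (fun _ _ => (exp_pos _).le)
      (Finset.mem_univ i)
  have hexp : Integrable (fun ω => exp (l * ⨆ i, Y i ω)) μ :=
    hsum.mono' (hint.const_mul l).aestronglyMeasurable.aemeasurable.exp.aestronglyMeasurable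
      (ae_of_all _ fun ω => by simpa only [norm_eq_abs, abs_exp] using hle ω)
  rw [← exp_le_exp, exp_add, exp_log (by positivity), ← integral_const_mul]
  calc exp (∫ ω, l * ⨆ i, Y i ω ∂μ)
      ≤ ∫ ω, exp (l * ⨆ i, Y i ω) ∂μ :=
        convexOn_exp.map_integral_le continuous_exp.continuousOn isClosed_univ
          (ae_of_all _ fun _ => mem_univ _) (hint.const_mul l) hexp
    _ ≤ ∫ ω, ∑ i, exp (l * Y i ω) ∂μ := integral_mono hexp hsum hle
    _ = ∑ i, mgf (Y i) μ l := integral_finsetSum _ fun i _ => (hY i).integrable_exp_mul l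
    _ ≤ ∑ _i : ι, exp (c * l ^ 2 / 2) := Finset.sum_le_sum fun i _ => (hY i).mgf_le l
    _ = Fintype.card ι * exp (c * l ^ 2 / 2) := by simp

lemma integral_iSup_le_sqrt_of_hasSubgaussianMGF [IsProbabilityMeasure μ] {ι : Type*} [Fintype ι]
    [Nonempty ι] {Y : ι → Ω → ℝ} {c : ℝ≥0} (hY : ∀ i, HasSubgaussianMGF (Y i) c μ) :
    ∫ ω, ⨆ i, Y i ω ∂μ ≤ √(2 * c * log (Fintype.card ι)) := by
  -- The exponential bound holds for every real `l`, so its discriminant in `l` is nonpositive: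
  -- this avoids the optimal `l`, which does not exist when `c = 0`.
  have hdiscrim : discrim ((c : ℝ) / 2) (-∫ ω, ⨆ i, Y i ω ∂μ) (log (Fintype.card ι)) ≤ 0 :=
    discrim_le_zero fun l => by linarith [mul_integral_iSup_le_of_hasSubgaussianMGF hY l]
  rw [discrim] at hdiscrim
  exact le_sqrt_of_sq_le (by linarith)

end Subgaussian

section Grid

/-- The `b`-adic grid point `k / b ^ m` of level `m`; for `k < b ^ m` these are the points of
`[0, 1)` along which the process is chained, the parent of the point `k` of level `m + 1` being
the point `k / b` (natural-number division) of level `m`. -/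
def gridPoint (b m k : ℕ) : ℝ := k / (b : ℝ) ^ m

/-- The largest increment of `f` from a `b`-adic grid point of level `m` to one of its children of
level `m + 1` (the value is `0` in the degenerate case `b = 0`, where there are no children). -/
def maxStep (b : ℕ) (f : ℝ → ℝ) (m : ℕ) : ℝ :=
  ⨆ k : Fin (b ^ (m + 1)), (f (gridPoint b (m + 1) k) - f (gridPoint b m (k / b)))

variable {b : ℕ} {f : ℝ → ℝ}

lemma gridPoint_zero_right (b m : ℕ) : gridPoint b m 0 = 0 := by simp [gridPoint]

lemma gridPoint_mem_Icc {m k : ℕ} (hk : k < b ^ m) : gridPoint b m k ∈ Icc (0 : ℝ) 1 :=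
  ⟨by unfold gridPoint; positivity,
    div_le_one_of_le₀ (by exact_mod_cast hk.le) (by positivity)⟩

lemma div_lt_pow_of_lt_pow_succ {m k : ℕ} (hk : k < b ^ (m + 1)) : k / b < b ^ m :=
  Nat.div_lt_of_lt_mul (by rwa [← pow_succ'])

lemma dist_gridPoint_parent_le (hb : b ≠ 0) (m k : ℕ) :
    dist (gridPoint b m (k / b)) (gridPoint b (m + 1) k) ≤ ((b : ℝ) ^ m)⁻¹ := by
  have hfloor : |((k / b : ℕ) : ℝ) - k / b| ≤ 1 := by
    rw [← Nat.floor_div_eq_div (K := ℝ), abs_sub_comm, abs_le]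
    have hle := Nat.floor_le (a := (k : ℝ) / b) (by positivity)
    have hlt := Nat.lt_floor_add_one ((k : ℝ) / b)
    constructor <;> linarith
  have hdiff : gridPoint b m (k / b) - gridPoint b (m + 1) k
      = (((k / b : ℕ) : ℝ) - k / b) * ((b : ℝ) ^ m)⁻¹ := by
    rw [gridPoint, gridPoint, pow_succ]
    field_simp
  rw [Real.dist_eq, hdiff, abs_mul, abs_of_nonneg (by positivity : 0 ≤ ((b : ℝ) ^ m)⁻¹)]
  exact mul_le_of_le_one_left (by positivity) hfloor

lemma closure_gridPoints (hb : 1 < b) :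
    closure {x | ∃ m, ∃ k < b ^ m, gridPoint b m k = x} = Icc 0 1 := by
  refine (closure_minimal ?_ isClosed_Icc).antisymm ?_
  · rintro _ ⟨m, k, hk, rfl⟩
    exact gridPoint_mem_Icc hk
  · rw [← closure_Ico (zero_ne_one' ℝ)]
    refine closure_minimal (fun t ht => ?_) isClosed_closure
    have hpow : Tendsto (fun m : ℕ => (b : ℝ) ^ m) atTop atTop :=
      tendsto_pow_atTop_atTop_of_one_lt (by exact_mod_cast hb)
    have hlim := (tendsto_nat_floor_mul_div_atTop ht.1).comp hpow
    refine mem_closure_of_tendsto hlim (Eventually.of_forall fun m => ⟨m, _, ?_, rfl⟩)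
    rw [Nat.floor_lt (by have := ht.1; positivity)]
    push_cast
    exact mul_lt_of_lt_one_left (by positivity) ht.2

lemma sub_parent_le_maxStep {m k : ℕ} (hk : k < b ^ (m + 1)) :
    f (gridPoint b (m + 1) k) - f (gridPoint b m (k / b)) ≤ maxStep b f m :=
  le_ciSup (f := fun k : Fin (b ^ (m + 1)) =>
    f (gridPoint b (m + 1) k) - f (gridPoint b m (k / b))) (finite_range _).bddAbove ⟨k, hk⟩

lemma maxStep_nonneg (hb : b ≠ 0) (m : ℕ) : 0 ≤ maxStep b f m := by
  simpa [gridPoint_zero_right] using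
    sub_parent_le_maxStep (f := f) (Nat.pow_pos (n := m + 1) (Nat.pos_of_ne_zero hb))

lemma apply_gridPoint_le_add_sum_maxStep {m k : ℕ} (hk : k < b ^ m) :
    f (gridPoint b m k) ≤ f 0 + ∑ n ∈ Finset.range m, maxStep b f n := by
  induction m generalizing k with
  | zero =>
    obtain rfl : k = 0 := by simpa using hk
    simp [gridPoint_zero_right]
  | succ m ih =>
    rw [Finset.sum_range_succ]
    linarith [ih (div_lt_pow_of_lt_pow_succ hk), sub_parent_le_maxStep (f := f) hk]

lemma ofReal_iSup_sub_le_tsum_maxStep (hf : ContinuousOn f (Icc 0 1)) (hb : 1 < b) :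
    ENNReal.ofReal ((⨆ t : Icc (0 : ℝ) 1, f t) - f 0)
      ≤ ∑' m, ENNReal.ofReal (maxStep b f m) := by
  rcases eq_or_ne (∑' m, ENNReal.ofReal (maxStep b f m)) ⊤ with htop | htop
  · simp [htop]
  rw [ENNReal.ofReal_le_iff_le_toReal htop, sub_le_iff_le_add']
  refine ciSup_le fun ⟨t, ht⟩ => ?_
  rw [← closure_gridPoints hb] at hf ht
  refine le_on_closure (fun x hx => ?_) hf continuousOn_const ht
  obtain ⟨m, k, hk, rfl⟩ := hx
  refine (apply_gridPoint_le_add_sum_maxStep hk).trans (add_le_add_right ?_ _)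
  rw [← ENNReal.ofReal_le_iff_le_toReal htop,
    ENNReal.ofReal_sum_of_nonneg fun n _ => maxStep_nonneg (by lia) n]
  exact ENNReal.sum_le_tsum _

end Grid

section ChainingSeries

lemma exists_nat_two_le_rpow_le_four {H : ℝ} (hH : H ∈ Ioc (0 : ℝ) 1) :
    ∃ b : ℕ, 1 < b ∧ 2 ≤ (b : ℝ) ^ H ∧ (b : ℝ) ^ H ≤ 4 := by
  obtain ⟨hH0, hH1⟩ := hH
  set x : ℝ := 2 ^ (1 / H)
  have hxH : x ^ H = 2 := by rw [← rpow_mul zero_le_two, one_div_mul_cancel hH0.ne', rpow_one]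
  have hx1 : 1 < x := one_lt_rpow one_lt_two (by positivity)
  have hxb : x ≤ ⌈x⌉₊ := Nat.le_ceil x
  have hbx : (⌈x⌉₊ : ℝ) ≤ 2 * x := by linarith [Nat.ceil_lt_add_one (zero_le_one.trans hx1.le)]
  refine ⟨⌈x⌉₊, by exact_mod_cast hx1.trans_le hxb, ?_, ?_⟩
  · exact hxH.symm.le.trans (rpow_le_rpow (by positivity) hxb hH0.le)
  · calc (⌈x⌉₊ : ℝ) ^ H ≤ (2 * x) ^ H := rpow_le_rpow (by positivity) hbx hH0.le
      _ = 2 ^ H * 2 := by rw [mul_rpow zero_le_two (by positivity), hxH]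
      _ ≤ 2 ^ (1 : ℝ) * 2 := by gcongr; exact one_le_two
      _ = 4 := by norm_num

lemma log_le_log_div_of_rpow_le {x y H : ℝ} (hH : 0 < H) (hx : 0 < x) (hxy : x ^ H ≤ y) :
    log x ≤ log y / H := by
  rw [le_div_iff₀' hH, ← log_rpow hx]
  exact log_le_log (by positivity) hxy

lemma inv_pow_rpow_le_of_le_rpow {x q H : ℝ} (hx : 0 ≤ x) (hq : 0 < q) (hqx : q ≤ x ^ H) (m : ℕ) :
    ((x ^ m)⁻¹) ^ H ≤ (q⁻¹) ^ m := by
  rw [inv_rpow (by positivity), ← rpow_pow_comm hx, inv_pow]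
  gcongr

lemma log_four_le_two : log 4 ≤ 2 := by
  rw [show (4 : ℝ) = 2 ^ 2 by norm_num, log_pow, Nat.cast_ofNat]
  linarith [log_two_lt_d9]

lemma sqrt_two_mul_sq_mul_log_pow_le {b C H : ℝ} (hb : 1 < b) (hC : 0 ≤ C) (hH : 0 < H)
    (hb2 : 2 ≤ b ^ H) (hb4 : b ^ H ≤ 4) (m : ℕ) :
    √(2 * (C * ((b ^ m)⁻¹) ^ H) ^ 2 * log (b ^ (m + 1)))
      ≤ C / √H * ((m + 2) * (1 / 2) ^ m) := by
  have hb0 : 0 < b := zero_lt_one.trans hb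
  have hdist : ((b ^ m)⁻¹) ^ H ≤ (1 / 2) ^ m := by
    rw [one_div]
    exact inv_pow_rpow_le_of_le_rpow hb0.le two_pos hb2 m
  have hlog : log b ≤ 2 / H :=
    (log_le_log_div_of_rpow_le hH hb0 hb4).trans (by gcongr; exact log_four_le_two)
  have hlog0 : 0 ≤ log b := log_nonneg hb.le
  rw [sqrt_le_left (by positivity)]
  calc 2 * (C * ((b ^ m)⁻¹) ^ H) ^ 2 * log (b ^ (m + 1))
      = 2 * (C * ((b ^ m)⁻¹) ^ H) ^ 2 * ((m + 1) * log b) := by rw [log_pow, Nat.cast_add_one]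
    _ ≤ 2 * (C * (1 / 2) ^ m) ^ 2 * ((m + 1) * (2 / H)) := by gcongr
    _ = (C * (1 / 2) ^ m) ^ 2 * (4 * (m + 1)) / H := by ring
    _ ≤ (C * (1 / 2) ^ m) ^ 2 * (m + 2) ^ 2 / H := by
        gcongr
        nlinarith [sq_nonneg (m : ℝ)]
    _ = (C * (1 / 2) ^ m) ^ 2 * (m + 2) ^ 2 / √H ^ 2 := by rw [sq_sqrt hH.le]
    _ = (C / √H * ((m + 2) * (1 / 2) ^ m)) ^ 2 := by ring

lemma hasSum_add_two_mul_half_pow :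
    HasSum (fun m : ℕ => ((m : ℝ) + 2) * (1 / 2) ^ m) 6 := by
  have hlin := hasSum_coe_mul_geometric_of_norm_lt_one (r := (1 / 2 : ℝ)) (by norm_num)
  convert! hlin.add (hasSum_geometric_two.mul_left 2) using 1
  · simp only [add_mul]
  · norm_num

end ChainingSeries

/-- The increments of the process `X` at times in `S` are sub-Gaussian with standard-deviation
proxy `C * dist s t ^ H`; this is the form in which Hölder continuity in `L²` of a Gaussian process
enters the chaining argument. -/
def HasSubgaussianIncrementsOn {Ω T : Type*} [MeasurableSpace Ω] [PseudoMetricSpace T]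
    (X : T → Ω → ℝ) (C : ℝ≥0) (H : ℝ) (S : Set T) (μ : Measure Ω) : Prop :=
  ∀ s ∈ S, ∀ t ∈ S, HasSubgaussianMGF (fun ω => X t ω - X s ω) ((C * nndist s t ^ H) ^ 2) μ

namespace HasSubgaussianIncrementsOn

variable {Ω : Type*} [MeasurableSpace Ω] {μ : Measure Ω} {X : ℝ → Ω → ℝ} {C : ℝ≥0} {H : ℝ} {b : ℕ}

lemma hasSubgaussianMGF_step (hX : HasSubgaussianIncrementsOn X C H (Icc 0 1) μ) (hH : 0 ≤ H)
    {m k : ℕ} (hk : k < b ^ (m + 1)) :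
    HasSubgaussianMGF (fun ω => X (gridPoint b (m + 1) k) ω - X (gridPoint b m (k / b)) ω)
      ((C * (((b : ℝ≥0) ^ m)⁻¹) ^ H) ^ 2) μ := by
  have hb : b ≠ 0 := by rintro rfl; simp at hk
  refine hasSubgaussianMGF_of_le (hX _ (gridPoint_mem_Icc (div_lt_pow_of_lt_pow_succ hk)) _
    (gridPoint_mem_Icc hk)) ?_
  gcongr
  exact_mod_cast dist_gridPoint_parent_le hb m k

lemma integrable_maxStep (hX : HasSubgaussianIncrementsOn X C H (Icc 0 1) μ) (hH : 0 ≤ H)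
    (b m : ℕ) : Integrable (fun ω => maxStep b (X · ω) m) μ :=
  integrable_iSup_of_finite fun k => (hX.hasSubgaussianMGF_step hH k.2).integrable

lemma integral_maxStep_le [IsProbabilityMeasure μ]
    (hX : HasSubgaussianIncrementsOn X C H (Icc 0 1) μ) (hH : 0 ≤ H) (hb : b ≠ 0) (m : ℕ) :
    ∫ ω, maxStep b (X · ω) m ∂μ
      ≤ √(2 * (C * (((b : ℝ) ^ m)⁻¹) ^ H) ^ 2 * log ((b : ℝ) ^ (m + 1))) := by
  have : NeZero b := ⟨hb⟩
  simpa [maxStep] using integral_iSup_le_sqrt_of_hasSubgaussianMGF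
    fun k : Fin (b ^ (m + 1)) => hX.hasSubgaussianMGF_step hH k.2

lemma aemeasurable_iSup (hX : HasSubgaussianIncrementsOn X C H (Icc 0 1) μ)
    (hX0 : AEMeasurable (X 0) μ) (hcont : ∀ᵐ ω ∂μ, ContinuousOn (X · ω) (Icc 0 1)) :
    AEMeasurable (fun ω => ⨆ t : Icc (0 : ℝ) 1, X t ω) μ := by
  refine aemeasurable_iSup_of_ae_continuous (X := fun t : Icc (0 : ℝ) 1 => X t) (fun t => ?_) ?_
  · simpa [Pi.add_def] using (hX 0 (by simp) t t.2).aemeasurable.add hX0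
  · filter_upwards [hcont] with ω hω using hω.domRestrict

end HasSubgaussianIncrementsOn

theorem stmt1_general {Ω : Type*} [MeasurableSpace Ω] {μ : Measure Ω} [IsProbabilityMeasure μ]
    {X : ℝ → Ω → ℝ} {C : ℝ≥0} {H : ℝ} (hH : H ∈ Ioc (0 : ℝ) 1)
    (hX : HasSubgaussianIncrementsOn X C H (Icc 0 1) μ) (hX0 : Integrable (X 0) μ)
    (hcont : ∀ᵐ ω ∂μ, ContinuousOn (X · ω) (Icc 0 1)) :
    Integrable (fun ω => ⨆ t : Icc (0 : ℝ) 1, X t ω) μ ∧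
      ∫ ω, ⨆ t : Icc (0 : ℝ) 1, X t ω ∂μ ≤ ∫ ω, X 0 ω ∂μ + 6 * C / √H := by
  obtain ⟨b, hb, hb2, hb4⟩ := exists_nat_two_le_rpow_le_four hH
  have hsum := hasSum_add_two_mul_half_pow.mul_left (C / √H)
  obtain ⟨hint, hle⟩ := integrable_and_integral_le_of_ofReal_le_tsum
    (Z := fun ω => (⨆ t : Icc (0 : ℝ) 1, X t ω) - X 0 ω)
    ((hX.aemeasurable_iSup hX0.aemeasurable hcont).sub hX0.aemeasurable).aestronglyMeasurable
    (hcont.mono fun ω hω => sub_nonneg.2 (le_ciSup_set (isCompact_Icc.bddAbove_image hω) (by simp)))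
    (hX.integrable_maxStep hH.1.le b)
    (fun m => ae_of_all _ fun ω => maxStep_nonneg (by lia) m)
    (hcont.mono fun ω hω => ofReal_iSup_sub_le_tsum_maxStep hω hb)
    (fun m => (hX.integral_maxStep_le hH.1.le (by lia) m).trans
      (sqrt_two_mul_sq_mul_log_pow_le (by exact_mod_cast hb) C.2 hH.1 hb2 hb4 m)) hsum
  have hsup : Integrable (fun ω => ⨆ t : Icc (0 : ℝ) 1, X t ω) μ := by
    simpa only [Pi.add_def, sub_add_cancel] using hint.add hX0
  rw [integral_sub hsup hX0] at hle
  refine ⟨hsup, ?_⟩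
  linarith [show (C : ℝ) / √H * 6 = 6 * C / √H by ring]

section Gaussian

variable {Ω : Type} [MeasurableSpace Ω] {μ : Measure Ω}

lemma l2norm_sq_of_hasLaw_gaussianReal {Y : Ω → ℝ} {v : ℝ≥0}
    (hY : HasLaw Y (gaussianReal 0 v) μ) : l2norm μ Y ^ 2 = v := by
  have hmean : ∫ ω, Y ω ∂μ = 0 := hY.integral_eq.trans integral_id_gaussianReal
  rw [l2norm, sq_sqrt (integral_nonneg fun _ => sq_nonneg _),
    ← variance_of_integral_eq_zero hY.aemeasurable hmean, hY.variance_eq, variance_id_gaussianReal]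

namespace IsCenteredGaussianOn

variable {X : ℝ → Ω → ℝ} {S : Set ℝ} {s t : ℝ}

lemma exists_hasLaw (h : IsCenteredGaussianOn μ X S) (ht : t ∈ S) :
    ∃ v : ℝ≥0, HasLaw (X t) (gaussianReal 0 v) μ := by
  obtain ⟨v, hv⟩ := h.2 1 ![1] ![t] (by simpa)
  exact ⟨v, (h.1 t ht).aemeasurable, by simpa using hv⟩

lemma exists_hasLaw_sub (h : IsCenteredGaussianOn μ X S) (hs : s ∈ S) (ht : t ∈ S) :
    ∃ v : ℝ≥0, HasLaw (fun ω => X t ω - X s ω) (gaussianReal 0 v) μ := by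
  obtain ⟨v, hv⟩ := h.2 2 ![1, -1] ![t, s] (by simp [Fin.forall_fin_two, hs, ht])
  exact ⟨v, ((h.1 t ht).sub (h.1 s hs)).aemeasurable,
    by simpa [Fin.sum_univ_two, sub_eq_add_neg] using hv⟩

lemma integrable (h : IsCenteredGaussianOn μ X S) (ht : t ∈ S) : Integrable (X t) μ := by
  obtain ⟨v, hv⟩ := h.exists_hasLaw ht
  exact hv.hasGaussianLaw.integrable

lemma integral_eq_zero_s1 (h : IsCenteredGaussianOn μ X S) (ht : t ∈ S) : ∫ ω, X t ω ∂μ = 0 := by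
  obtain ⟨v, hv⟩ := h.exists_hasLaw ht
  exact hv.integral_eq.trans integral_id_gaussianReal

lemma hasSubgaussianIncrementsOn (h : IsCenteredGaussianOn μ X S) {C : ℝ≥0} {H : ℝ}
    (hC : ∀ s ∈ S, ∀ t ∈ S, l2norm μ (fun ω => X t ω - X s ω) ≤ C * |t - s| ^ H) :
    HasSubgaussianIncrementsOn X C H S μ := by
  intro s hs t ht
  obtain ⟨v, hv⟩ := h.exists_hasLaw_sub hs ht
  have hsub : HasSubgaussianMGF (fun ω => X t ω - X s ω) v μ :=
    (HasSubgaussianMGF.id_map_iff hv.aemeasurable).1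
      (hv.map_eq ▸ hasSubgaussianMGF_id_gaussianReal v)
  refine hasSubgaussianMGF_of_le hsub ?_
  rw [← NNReal.coe_le_coe, ← l2norm_sq_of_hasLaw_gaussianReal hv]
  push_cast
  rw [dist_comm, Real.dist_eq]
  exact pow_le_pow_left₀ (sqrt_nonneg _) (hC s hs t ht) 2

end IsCenteredGaussianOn

end Gaussian

/-- upper bound for the expected maximum of a centered Gaussian process
with a.s. continuous paths whose increments satisfy `‖X_t - X_s‖₂ ≤ C |t-s|^H`. -/
theorem stmt1 {Ω : Type} [MeasurableSpace Ω] (μ : Measure Ω) [IsProbabilityMeasure μ]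
    (X : ℝ → Ω → ℝ) (C H : ℝ) (hC : 0 < C) (hH : H ∈ Ioo (0:ℝ) 1)
    (hgauss : IsCenteredGaussianOn μ X (Icc 0 1))
    (hcont : ∀ᵐ ω ∂μ, ContinuousOn (fun t => X t ω) (Icc 0 1))
    (hupp : ∀ s ∈ Icc (0:ℝ) 1, ∀ t ∈ Icc (0:ℝ) 1,
      l2norm μ (fun ω => X t ω - X s ω) ≤ C * |t - s| ^ H) :
    expMax μ X < 16.3 * C / Real.sqrt H := by
  lift C to ℝ≥0 using hC.le
  have h0 : (0 : ℝ) ∈ Icc (0 : ℝ) 1 := by simp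
  have hle := (stmt1_general ⟨hH.1, hH.2.le⟩ (hgauss.hasSubgaussianIncrementsOn hupp)
    (hgauss.integrable h0) hcont).2
  rw [hgauss.integral_eq_zero_s1 h0, zero_add] at hle
  have := sqrt_pos.2 hH.1
  exact hle.trans_lt (by gcongr; norm_num)
end
end
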